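/- arXiv:1607.04871 — 8 statements merged into one kernel-verified Lean document; each statement's English description precedes it below -/
import Mathlib

section
/- For every integer n ≥ 2, the (n−1)-dimensional simplex Q_n admits the half-space description Q_n = { x ∈ ℝ^{n−1} : k·x_k − (x_1 + x_2 + ⋯ + x_{k−1}) ≤ 1 for every 1 ≤ k ≤ n−1, and −(x_1 + x_2 + ⋯ + x_{n−1}) ≤ 1 }. -/
open Finset

/-- The vertex `C_j` of the simplex `Q_n ⊂ ℝ^{n-1}`: coordinate `i` (0-based; the
1-based coordinate is `i+1`) equals `1` if `i+1 < n-j`, equals `-(n-j)` if `i+1 = n-j`,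
and equals `0` if `i+1 > n-j`.  For `j = 0` this is the all-ones vector. -/
noncomputable def Cvert (n j : ℕ) : Fin (n - 1) → ℝ := fun i =>
  if (i : ℕ) + 1 < n - j then 1
  else if (i : ℕ) + 1 = n - j then -((n : ℝ) - (j : ℝ))
  else 0

/-- The simplex `Q_n = conv{C_0, C_1, …, C_{n-1}} ⊂ ℝ^{n-1}`. -/
noncomputable def Qpoly (n : ℕ) : Set (Fin (n - 1) → ℝ) :=
  convexHull ℝ {x | ∃ j ≤ n - 1, x = Cvert n j}

lemma Cvert_apply (m q : ℕ) (hq : q ≤ m) (i : Fin (m + 1 - 1)) :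
    Cvert (m + 1) (m - q) i =
      if (i : ℕ) < q then 1 else if (i : ℕ) = q then -((q : ℝ) + 1) else 0 := by
  have h : m + 1 - (m - q) = q + 1 := by omega
  unfold Cvert
  rw [h, Nat.cast_sub hq]
  simp only [Nat.add_lt_add_iff_right, Nat.add_right_cancel_iff]
  push_cast
  congr 2
  ring

lemma sum_Iio_fin {m : ℕ} (k : Fin m) (f : ℕ → ℝ) :
    ∑ i ∈ Finset.Iio k, f (i : ℕ) = ∑ i ∈ Finset.range k, f i := by
  have h := Finset.sum_map (Finset.Iio k) Fin.valEmbedding f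
  rw [Fin.map_valEmbedding_Iio, Nat.Iio_eq_range] at h
  rw [h]
  rfl

lemma vsum (q k : ℕ) :
    ∑ i ∈ Finset.range k,
      (if i < q then (1 : ℝ) else if i = q then -((q : ℝ) + 1) else 0) =
      if k ≤ q then (k : ℝ) else -1 := by
  induction k with
  | zero => simp
  | succ k ih =>
    rw [Finset.sum_range_succ, ih]
    rcases lt_trichotomy k q with h | h | h
    · simp [h, h.le, Nat.succ_le_of_lt h]
    · subst h
      simp
    · simp [not_lt.2 h.le, h.ne', not_le.2 h, not_le.2 (Nat.lt_succ_of_lt h)]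

lemma wsum (T : ℕ → ℝ) (i N : ℕ) :
    ∑ q ∈ Finset.range N, (T q - T (q + 1)) *
      (if i < q then (1 : ℝ) else if i = q then -((q : ℝ) + 1) else 0) =
      if N ≤ i then 0 else -((i : ℝ) + 1) * (T i - T (i + 1)) + T (i + 1) - T N := by
  induction N with
  | zero => simp
  | succ N ih =>
    rw [Finset.sum_range_succ, ih]
    rcases lt_trichotomy N i with h | h | h
    · simp [h.le, Nat.succ_le_of_lt h, not_lt.2 h.le, h.ne']
    · subst h
      simp
      ring
    · simp [h, not_le.2 h, not_le.2 (Nat.lt_succ_of_lt h)]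

/-- For every integer `n ≥ 2`, the simplex `Q_n` admits the half-space
description `Q_n = {x ∈ ℝ^{n-1} : k·x_k - (x_1 + ⋯ + x_{k-1}) ≤ 1 for 1 ≤ k ≤ n-1,
and -(x_1 + ⋯ + x_{n-1}) ≤ 1}`.  Here the 1-based coordinate `x_k` corresponds to the
coordinate indexed by `k : Fin (n-1)` (with 1-based value `(k : ℕ) + 1`). -/
theorem stmt_0 (n : ℕ) (hn : 2 ≤ n) :
    Qpoly n = {x : Fin (n - 1) → ℝ |
      (∀ k : Fin (n - 1), (((k : ℕ) + 1 : ℕ) : ℝ) * x k - ∑ i ∈ Finset.Iio k, x i ≤ 1) ∧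
      -∑ i, x i ≤ 1} := by
  obtain ⟨m, rfl⟩ : ∃ m, n = m + 1 := ⟨n - 1, by omega⟩
  apply Set.Subset.antisymm
  · apply convexHull_min
    · rintro x ⟨j, hj, rfl⟩
      obtain ⟨q, hq, rfl⟩ : ∃ q, q ≤ m ∧ j = m - q := ⟨m - j, by omega, by omega⟩
      simp only [Set.mem_setOf_eq, Cvert_apply m q hq]
      constructor
      · intro k
        rw [sum_Iio_fin k
          (fun i => if i < q then (1 : ℝ) else if i = q then -((q : ℝ) + 1) else 0), vsum]
        rcases lt_trichotomy (k : ℕ) q with h | h | h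
        · simp [h, h.le]
        · rw [h]
          simp
          have : (0 : ℝ) ≤ q := Nat.cast_nonneg q
          nlinarith
        · simp [not_lt.2 h.le, h.ne', not_le.2 h]
      · rw [Fin.sum_univ_eq_sum_range
          (fun i => if i < q then (1 : ℝ) else if i = q then -((q : ℝ) + 1) else 0), vsum]
        split_ifs
        · have : (0 : ℝ) ≤ ((m + 1 - 1 : ℕ) : ℝ) := Nat.cast_nonneg _
          linarith
        · norm_num
    · rintro x ⟨hx1, hx2⟩ y ⟨hy1, hy2⟩ a b ha hb hab
      simp only [Set.mem_setOf_eq, Pi.add_apply, Pi.smul_apply, smul_eq_mul,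
        Finset.sum_add_distrib, ← Finset.mul_sum]
      constructor
      · intro k
        have h1 := mul_le_mul_of_nonneg_left (hx1 k) ha
        have h2 := mul_le_mul_of_nonneg_left (hy1 k) hb
        linarith
      · have h1 := mul_le_mul_of_nonneg_left hx2 ha
        have h2 := mul_le_mul_of_nonneg_left hy2 hb
        linarith
  · rintro x ⟨hx1, hx2⟩
    let y : ℕ → ℝ := fun i => if h : i < m then x ⟨i, h⟩ else 0
    have hy : ∀ i : Fin (m + 1 - 1), x i = y i := by
      intro i
      have hi : (i : ℕ) < m := i.2
      simp [y, hi]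
    let S : ℕ → ℝ := fun k => ∑ i ∈ Finset.range k, y i
    have hS : ∀ k, S (k + 1) = S k + y k := fun k => Finset.sum_range_succ _ _
    let T : ℕ → ℝ := fun q => if q ≤ m then (1 + S q) / (q + 1) else 0
    have hT : ∀ q ≤ m, ((q : ℝ) + 1) * T q = 1 + S q := by
      intro q hq
      have : (q : ℝ) + 1 ≠ 0 := by positivity
      simp only [T, hq, if_true]
      field_simp
    have hTm : T (m + 1) = 0 := by simp [T]
    have hT0 : T 0 = 1 := by simp [T, S]
    have hw : ∀ q ∈ Finset.range (m + 1), 0 ≤ T q - T (q + 1) := by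
      intro q hq
      have hq' : q ≤ m := by simpa [Nat.lt_succ_iff] using hq
      rcases hq'.lt_or_eq with h | h
      · have h1 := hx1 ⟨q, h⟩
        simp only [hy] at h1
        rw [sum_Iio_fin _ y] at h1
        change ((q + 1 : ℕ) : ℝ) * y q - S q ≤ 1 at h1
        have a1 := hT q hq'
        have a2 := hT (q + 1) h
        rw [hS] at a2
        push_cast at h1 a2
        have hp : (0 : ℝ) < ((q : ℝ) + 1) * (q + 2) := by positivity
        have key : ((q : ℝ) + 1) * (q + 2) * (T q - T (q + 1)) =
            1 + S q - (q + 1) * y q := by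
          linear_combination ((q : ℝ) + 2) * a1 - ((q : ℝ) + 1) * a2
        by_contra hneg
        push Not at hneg
        have := mul_neg_of_pos_of_neg hp hneg
        linarith
      · subst h
        rw [hTm, sub_zero]
        simp only [hy] at hx2
        rw [Fin.sum_univ_eq_sum_range y] at hx2
        change -S q ≤ 1 at hx2
        simp only [T, le_refl, if_true]
        apply div_nonneg
        · linarith
        · positivity
    have hsum : ∑ q ∈ Finset.range (m + 1), (T q - T (q + 1)) = 1 := by
      rw [Finset.sum_range_sub', hT0, hTm, sub_zero]
    have hx : x = ∑ q ∈ Finset.range (m + 1), (T q - T (q + 1)) • Cvert (m + 1) (m - q) := by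
      funext i
      have hi : (i : ℕ) < m := i.2
      rw [Finset.sum_apply]
      have : ∀ q ∈ Finset.range (m + 1),
          ((T q - T (q + 1)) • Cvert (m + 1) (m - q)) i = (T q - T (q + 1)) *
      (if (i : ℕ) < q then (1 : ℝ) else if (i : ℕ) = q then -((q : ℝ) + 1) else 0) := by
        intro q hq
        rw [Pi.smul_apply, smul_eq_mul,
          Cvert_apply m q (by simpa [Nat.lt_succ_iff] using hq)]
      rw [Finset.sum_congr rfl this, wsum, if_neg (by omega), hTm, hy]
      have a1 := hT i hi.le
      have a2 := hT (i + 1) hi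
      rw [hS] at a2
      push_cast at a2
      linear_combination a1 - a2
    rw [hx]
    apply (convex_convexHull ℝ _).sum_mem hw hsum
    intro q hq
    exact subset_convexHull ℝ _ ⟨m - q, by omega, rfl⟩
end

section
/- For every integer n ≥ 2, the dual polytope of Q_n equals −Q_n, i.e. Q_n^∨ = { −x : x ∈ Q_n }. -/
open Finset

/-- The dual polytope `P^∨ = {y ∈ ℝ^d : ⟨x, y⟩ ≤ 1 for all x ∈ P}`. -/
def dualPoly {d : ℕ} (P : Set (Fin d → ℝ)) : Set (Fin d → ℝ) :=
  {y | ∀ x ∈ P, ∑ i, x i * y i ≤ 1}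

/-- Reindexed vertices. -/
noncomputable def wv (p i : ℕ) : ℝ := if i < p then 1 else if i = p then -((p : ℝ) + 1) else 0

/-- The normalising weights. -/
noncomputable def Dw (p : ℕ) : ℝ := ((p : ℝ) + 1) * ((p : ℝ) + 2)

lemma sum_D (d : ℕ) : ∑ p ∈ range d, 1 / Dw p = 1 - 1 / ((d : ℝ) + 1) := by
  induction d with
  | zero => simp
  | succ d ih =>
    rw [sum_range_succ, ih]
    unfold Dw
    push_cast
    have h1 : (d : ℝ) + 1 ≠ 0 := by positivity
    have h2 : (d : ℝ) + 2 ≠ 0 := by positivity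
    have h3 : (d : ℝ) + 1 + 1 ≠ 0 := by positivity
    field_simp
    ring

lemma sum_wD (k d : ℕ) :
    ∑ p ∈ range d, wv p k / Dw p = if k < d then - (1 / ((d : ℝ) + 1)) else 0 := by
  induction d with
  | zero => simp
  | succ d ih =>
    rw [sum_range_succ, ih]
    unfold Dw wv
    push_cast
    have h1 : (d : ℝ) + 1 ≠ 0 := by positivity
    have h2 : (d : ℝ) + 2 ≠ 0 := by positivity
    have h3 : (d : ℝ) + 1 + 1 ≠ 0 := by positivity
    split_ifs <;> first | omega | (field_simp; ring)  | simp

lemma sum_wwD (k l d : ℕ) :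
    ∑ p ∈ range d, wv p k * wv p l / Dw p =
      if k < d ∧ l < d then (if k = l then 1 else 0) - (1 / ((d : ℝ) + 1)) else 0 := by
  induction d with
  | zero => simp
  | succ d ih =>
    rw [sum_range_succ, ih]
    unfold Dw wv
    push_cast
    have h1 : (d : ℝ) + 1 ≠ 0 := by positivity
    have h2 : (d : ℝ) + 2 ≠ 0 := by positivity
    have h3 : (d : ℝ) + 1 + 1 ≠ 0 := by positivity
    split_ifs <;> first | omega | (field_simp; ring) | simp

lemma Cvert_eq (d p : ℕ) (hp : p ≤ d) (i : Fin (d + 1 - 1)) :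
    Cvert (d + 1) (d - p) i = wv p i := by
  unfold Cvert wv
  have h : d + 1 - (d - p) = p + 1 := by omega
  rw [h, Nat.cast_sub hp]
  simp only [Nat.add_lt_add_iff_right, Nat.add_right_cancel_iff]
  push_cast
  split_ifs <;> ring

/-- Full weights, including the last vertex. -/
noncomputable def Ew (d p : ℕ) : ℝ := if p < d then Dw p else (d : ℝ) + 1

lemma Ew_pos (d p : ℕ) : 0 < Ew d p := by
  unfold Ew Dw; split_ifs <;> positivity

lemma sum_E (d : ℕ) (f : ℕ → ℝ) :
    ∑ p ∈ range (d + 1), f p / Ew d p = ∑ p ∈ range d, f p / Dw p + f d / ((d : ℝ) + 1) := by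
  rw [sum_range_succ]
  congr 1
  · refine sum_congr rfl fun p hp => ?_
    rw [Ew, if_pos (mem_range.1 hp)]
  · simp [Ew]

lemma sum_E1 (d : ℕ) : ∑ p ∈ range (d + 1), 1 / Ew d p = 1 := by
  rw [sum_E d (fun _ => 1), sum_D]; ring

lemma sum_Ew (d k : ℕ) (hk : k < d) : ∑ p ∈ range (d + 1), wv p k / Ew d p = 0 := by
  rw [sum_E d (fun p => wv p k), sum_wD]; simp [wv, hk]

lemma sum_Eww (d k l : ℕ) (hk : k < d) (hl : l < d) :
    ∑ p ∈ range (d + 1), wv p k * wv p l / Ew d p = if k = l then 1 else 0 := by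
  rw [sum_E d (fun p => wv p k * wv p l), sum_wwD]; simp [wv, hk, hl]

lemma sum_shift (p d : ℕ) :
    ∑ i ∈ range d, wv p i = if p < d then -1 else (d : ℝ) := by
  induction d with
  | zero => simp
  | succ d ih =>
    rw [sum_range_succ, ih]
    unfold wv
    split_ifs <;> first | omega | (push_cast; ring) | skip
    all_goals
      have : d = p := by omega
      subst this; push_cast; ring

lemma inner_lt (p q d : ℕ) (hpq : p < q) (hp : p < d) :
    ∑ i ∈ range d, wv p i * wv q i = -1 := by
  have : ∀ i ∈ range d, wv p i * wv q i = wv p i := by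
    intro i _
    unfold wv
    split_ifs <;> first | omega | simp
  rw [sum_congr rfl this, sum_shift, if_pos hp]

lemma inner_le (p q d : ℕ) (hp : p ≤ d) (hq : q ≤ d) :
    -1 ≤ ∑ i ∈ range d, wv p i * wv q i := by
  rcases lt_trichotomy p q with h | h | h
  · rw [inner_lt p q d h (by omega)]
  · subst h
    have : 0 ≤ ∑ i ∈ range d, wv p i * wv p i := sum_nonneg fun i _ => mul_self_nonneg _
    linarith
  · simp_rw [mul_comm (wv p _)]
    rw [inner_lt q p d h (by omega)]

lemma dual_sub (d : ℕ) (y : Fin (d + 1 - 1) → ℝ) (hy : y ∈ dualPoly (Qpoly (d + 1))) :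
    -y ∈ Qpoly (d + 1) := by
  set s : ℕ → ℝ := fun p => ∑ l : Fin (d + 1 - 1), wv p l * y l with hs
  have hmem : ∀ p ∈ range (d + 1), Cvert (d + 1) (d - p) ∈ Qpoly (d + 1) := fun p _ =>
    subset_convexHull ℝ _ ⟨d - p, by omega, rfl⟩
  have hs1 : ∀ p ∈ range (d + 1), s p ≤ 1 := by
    intro p hp
    have := hy _ (hmem p hp)
    simpa only [Cvert_eq d p (Nat.lt_succ_iff.1 (mem_range.1 hp))] using this
  have hsw : ∀ f : ℕ → ℝ, ∑ p ∈ range (d + 1), f p * s p / Ew d p =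
      ∑ l : Fin (d + 1 - 1), (∑ p ∈ range (d + 1), f p * wv p l / Ew d p) * y l := by
    intro f
    simp_rw [hs, mul_sum, sum_div, sum_mul]
    rw [sum_comm]
    refine sum_congr rfl fun l _ => sum_congr rfl fun p _ => ?_
    ring
  have key : -y = ∑ p ∈ range (d + 1), ((1 - s p) / Ew d p) • Cvert (d + 1) (d - p) := by
    funext k
    rw [Finset.sum_apply]
    have h1 : ∀ p ∈ range (d + 1), (((1 - s p) / Ew d p) • Cvert (d + 1) (d - p)) k =
        wv p k / Ew d p - wv p k * s p / Ew d p := by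
      intro p hp
      rw [Pi.smul_apply, Cvert_eq d p (Nat.lt_succ_iff.1 (mem_range.1 hp)), smul_eq_mul]
      ring
    rw [sum_congr rfl h1, sum_sub_distrib, sum_Ew d k k.2, hsw (fun p => wv p k)]
    have h2 : ∀ l : Fin (d + 1 - 1),
        (∑ p ∈ range (d + 1), wv p k * wv p l / Ew d p) = if k = l then 1 else 0 := by
      intro l
      rw [sum_Eww d k l k.2 l.2]
      simp [Fin.ext_iff]
    simp [h2]
  rw [key]
  refine (convex_convexHull ℝ _).sum_mem ?_ ?_ hmem
  · intro p hp
    exact div_nonneg (by linarith [hs1 p hp]) (Ew_pos d p).le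
  · simp_rw [sub_div]
    rw [sum_sub_distrib, sum_E1]
    have := hsw (fun _ => 1)
    simp only [one_mul] at this
    rw [this, sum_eq_zero, sub_zero]
    intro l _
    rw [sum_Ew d l l.2, zero_mul]

lemma inner_ge (d : ℕ) (x z : Fin (d + 1 - 1) → ℝ) (hx : x ∈ Qpoly (d + 1))
    (hz : z ∈ Qpoly (d + 1)) : -1 ≤ ∑ i, x i * z i := by
  have hconv : ∀ u : Fin (d + 1 - 1) → ℝ,
      Convex ℝ {v : Fin (d + 1 - 1) → ℝ | -1 ≤ ∑ i, u i * v i} := by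
    intro u
    refine convex_halfSpace_ge (f := fun v : Fin (d + 1 - 1) → ℝ => ∑ i, u i * v i) ⟨?_, ?_⟩ _
    · intro a b; simp [mul_add, sum_add_distrib]
    · intro c a; simp only [Pi.smul_apply, smul_eq_mul, mul_sum]
      exact sum_congr rfl fun i _ => by ring
  have step : ∀ u : Fin (d + 1 - 1) → ℝ, 
      (∀ j ≤ d, -1 ≤ ∑ i, u i * Cvert (d + 1) j i) → 
      ∀ v ∈ Qpoly (d + 1), -1 ≤ ∑ i, u i * v i := by
    intro u hu v hv
    refine convexHull_min ?_ (hconv u) hv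
    rintro _ ⟨j, hj, rfl⟩
    exact hu j hj
  refine step x (fun j hj => ?_) z hz
  simp_rw [mul_comm (x _)]
  refine step _ (fun q hq => ?_) x hx
  have e : ∀ j ≤ d, ∀ i, Cvert (d + 1) j i = wv (d - j) i := by
    intro j hj i
    rw [← Cvert_eq d (d - j) (by omega)]
    congr 1; omega
  simp_rw [e j hj, e q hq]
  have := inner_le (d - j) (d - q) d (by omega) (by omega)
  rw [← Fin.sum_univ_eq_sum_range (fun i => wv (d - j) i * wv (d - q) i)] at this
  exact this

/-- For every integer `n ≥ 2`, the dual polytope of `Q_n` equals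
`-Q_n = {-x : x ∈ Q_n}`. -/
theorem stmt_3 (n : ℕ) (hn : 2 ≤ n) :
    dualPoly (Qpoly n) = (fun x : Fin (n - 1) → ℝ => -x) '' Qpoly n := by
  obtain ⟨d, rfl⟩ : ∃ d, n = d + 1 := ⟨n - 1, by omega⟩
  ext y
  constructor
  · intro hy
    exact ⟨-y, dual_sub d y hy, neg_neg y⟩
  · rintro ⟨z, hz, rfl⟩ x hx
    have := inner_ge d x z hx hz
    simp only [Pi.neg_apply, mul_neg, sum_neg_distrib]
    linarith
end

section
/- For every integer n ≥ 2, the simplex Q_n is reflexive: the origin is the unique lattice point in the interior of Q_n, and the dual polytope Q_n^∨ is a lattice polytope (all of its vertices lie in ℤ^{n−1}). -/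
open Finset

/-- Barycentric weights of the origin. -/
noncomputable def wgt (n j : ℕ) : ℝ :=
  if j = 0 then 1 / (n : ℝ) else 1 / (((n : ℝ) - j) * ((n : ℝ) - j + 1))

lemma wgt_nonneg (n j : ℕ) (hj : j < n) : 0 < wgt n j := by
  have h : (j : ℝ) < n := by exact_mod_cast hj
  have h0 : (0 : ℝ) ≤ j := by positivity
  unfold wgt
  split_ifs
  · have : (0 : ℝ) < n := by linarith
    positivity
  · have : (0 : ℝ) < (n : ℝ) - j := by linarith
    positivity

lemma wgt_sum (n m : ℕ) (hm : m < n) :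
    ∑ j ∈ range (m + 1), wgt n j = 1 / ((n : ℝ) - m) := by
  induction m with
  | zero => simp [wgt]
  | succ m ih =>
    rw [sum_range_succ, ih (by omega)]
    have h : ((m : ℝ) + 1) < n := by exact_mod_cast hm
    have h1 : (n : ℝ) - m ≠ 0 := by linarith
    have h2 : (n : ℝ) - (m + 1) ≠ 0 := by linarith
    have h3 : (n : ℝ) - (m + 1) + 1 ≠ 0 := by linarith
    simp only [wgt, Nat.succ_ne_zero, if_false]
    push_cast
    field_simp
    ring

lemma wgt_total (n : ℕ) (hn : 2 ≤ n) : ∑ j ∈ range n, wgt n j = 1 := by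
  obtain ⟨m, rfl⟩ : ∃ m, n = m + 1 := ⟨n - 1, by omega⟩
  rw [wgt_sum _ _ (by omega)]
  push_cast
  simp

lemma wgt_gen (n a : ℕ) (ha : 1 ≤ a) (han : a < n) (f : ℕ → ℝ) (c e : ℝ)
    (h1 : ∀ j, j < n - a → f j = c) (h2 : f (n - a) = e)
    (h3 : ∀ j, n - a < j → j < n → f j = 0) :
    ∑ j ∈ range n, wgt n j * f j = c / (a + 1) + e / (a * (a + 1)) := by
  have hs : range (n - a + 1) ⊆ range n := by
    intro j; simp only [mem_range]; omega
  rw [← sum_subset hs, sum_range_succ, h2]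
  · have : ∑ j ∈ range (n - a), wgt n j * f j = ∑ j ∈ range (n - a), wgt n j * c :=
      sum_congr rfl fun j hj => by rw [h1 j (mem_range.1 hj)]
    rw [this, ← sum_mul]
    obtain ⟨m, hm⟩ : ∃ m, n - a = m + 1 := ⟨n - a - 1, by omega⟩
    rw [hm, wgt_sum n m (by omega)]
    have hnm : (n : ℝ) = m + 1 + a := by
      have : n = m + 1 + a := by omega
      exact_mod_cast this
    simp only [wgt, Nat.succ_ne_zero, if_false]
    push_cast
    rw [hnm]
    have e1 : (m : ℝ) + 1 + a - m = a + 1 := by ring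
    have e2 : (m : ℝ) + 1 + a - (m + 1) = a := by ring
    rw [e1, e2]
    ring
  · intro j hj hj'
    simp only [mem_range] at hj hj'
    rw [h3 j (by omega) hj, mul_zero]

lemma wgt_C (n : ℕ) (i : Fin (n - 1)) : ∑ j ∈ range n, wgt n j * Cvert n j i = 0 := by
  have hi := i.2
  have hcast : ((n - (i + 1) : ℕ) : ℝ) = n - (i + 1) := by
    rw [Nat.cast_sub (by omega)]; push_cast; ring
  rw [wgt_gen n (i + 1) (by omega) (by omega) _ 1 (-((i : ℝ) + 1))]
  · push_cast
    have : (i : ℝ) + 1 ≠ 0 := by positivity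
    have : (i : ℝ) + 1 + 1 ≠ 0 := by positivity
    field_simp
    ring
  · intro j hj
    simp only [Cvert]
    rw [if_pos (by omega)]
  · simp only [Cvert]
    rw [if_neg (by omega), if_pos (by omega), hcast]
    ring
  · intro j hj hj'
    simp only [Cvert]
    rw [if_neg (by omega), if_neg (by omega)]

lemma wgt_CC_self (n : ℕ) (i : Fin (n - 1)) :
    ∑ j ∈ range n, wgt n j * (Cvert n j i * Cvert n j i) = 1 := by
  have hi := i.2
  have hcast : ((n - (i + 1) : ℕ) : ℝ) = n - (i + 1) := by
    rw [Nat.cast_sub (by omega)]; push_cast; ring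
  rw [wgt_gen n (i + 1) (by omega) (by omega) _ 1 (((i : ℝ) + 1) * (i + 1))]
  · push_cast
    have : (i : ℝ) + 1 ≠ 0 := by positivity
    have : (i : ℝ) + 1 + 1 ≠ 0 := by positivity
    field_simp
    ring
  · intro j hj
    simp only [Cvert]
    rw [if_pos (by omega), one_mul]
  · simp only [Cvert]
    rw [if_neg (by omega), if_pos (by omega), hcast]
    ring
  · intro j hj hj'
    simp only [Cvert]
    rw [if_neg (by omega), if_neg (by omega), zero_mul]

lemma wgt_CC_lt (n : ℕ) (a b : Fin (n - 1)) (hab : a < b) :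
    ∑ j ∈ range n, wgt n j * (Cvert n j a * Cvert n j b) = 0 := by
  rw [← wgt_C n b]
  refine sum_congr rfl fun j _ => ?_
  have hab' : (a : ℕ) < b := hab
  by_cases h : (b : ℕ) + 1 ≤ n - j
  · have : Cvert n j a = 1 := by
      simp only [Cvert]
      rw [if_pos (by omega)]
    rw [this, one_mul]
  · have : Cvert n j b = 0 := by
      simp only [Cvert]
      rw [if_neg (by omega), if_neg (by omega)]
    rw [this, mul_zero]

lemma wgt_CC (n : ℕ) (a b : Fin (n - 1)) :
    ∑ j ∈ range n, wgt n j * (Cvert n j a * Cvert n j b) = if a = b then 1 else 0 := by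
  rcases lt_trichotomy a b with h | h | h
  · rw [wgt_CC_lt n a b h, if_neg h.ne]
  · subst h
    rw [wgt_CC_self, if_pos rfl]
  · rw [if_neg h.ne', ← wgt_CC_lt n b a h]
    exact sum_congr rfl fun j _ => by ring

/-- The frame identity. -/
lemma frame (n : ℕ) (x : Fin (n - 1) → ℝ) (b : Fin (n - 1)) :
    ∑ j ∈ range n, wgt n j * (∑ i, x i * Cvert n j i) * Cvert n j b = x b := by
  have : ∀ j ∈ range n, wgt n j * (∑ i, x i * Cvert n j i) * Cvert n j b
      = ∑ i, x i * (wgt n j * (Cvert n j i * Cvert n j b)) := by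
    intro j _
    rw [mul_sum, sum_mul]
    exact sum_congr rfl fun i _ => by ring
  rw [sum_congr rfl this, sum_comm]
  simp_rw [← mul_sum, wgt_CC]
  simp

lemma pair_zero (n : ℕ) (x : Fin (n - 1) → ℝ) :
    ∑ j ∈ range n, wgt n j * (∑ i, x i * Cvert n j i) = 0 := by
  have : ∀ j ∈ range n, wgt n j * (∑ i, x i * Cvert n j i)
      = ∑ i, x i * (wgt n j * Cvert n j i) := by
    intro j _
    rw [mul_sum]
    exact sum_congr rfl fun i _ => by ring
  rw [sum_congr rfl this, sum_comm]
  simp_rw [← mul_sum, wgt_C]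
  simp

lemma sum_C (n j : ℕ) (hj0 : 0 < j) (hj : j < n) : ∑ i, Cvert n j i = -1 := by
  have := Fin.sum_univ_eq_sum_range (fun i : ℕ => if i + 1 < n - j then (1 : ℝ)
    else if i + 1 = n - j then -((n : ℝ) - (j : ℝ)) else 0) (n - 1)
  unfold Cvert
  rw [this]
  obtain ⟨m, hm⟩ : ∃ m, n - j = m + 1 := ⟨n - j - 1, by omega⟩
  have hs : range (m + 1) ⊆ range (n - 1) := by
    intro j; simp only [mem_range]; omega
  rw [← sum_subset hs, sum_range_succ]
  · have h1 : ∑ i ∈ range m, (if i + 1 < n - j then (1 : ℝ)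
        else if i + 1 = n - j then -((n : ℝ) - (j : ℝ)) else 0) = ∑ i ∈ range m, (1 : ℝ) :=
      sum_congr rfl fun i hi => by
        have := mem_range.1 hi
        rw [if_pos (by omega)]
    rw [h1, if_neg (by omega), if_pos (by omega)]
    have hnm : (n : ℝ) = m + 1 + j := by
      have : n = m + 1 + j := by omega
      exact_mod_cast this
    rw [hnm]
    simp
  · intro i _ hi
    simp only [mem_range] at hi
    rw [if_neg (by omega), if_neg (by omega)]

lemma pair_lt (n j k : ℕ) (hkj : k < j) (hj : j < n) :
    ∑ i, Cvert n j i * Cvert n k i = -1 := by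
  rw [← sum_C n j (by omega) hj]
  refine sum_congr rfl fun i _ => ?_
  by_cases h : (i : ℕ) + 1 ≤ n - j
  · have : Cvert n k i = 1 := by
      simp only [Cvert]
      rw [if_pos (by omega)]
    rw [this, mul_one]
  · have : Cvert n j i = 0 := by
      simp only [Cvert]
      rw [if_neg (by omega), if_neg (by omega)]
    rw [this, zero_mul]

lemma pair_ge (n j k : ℕ) (hj : j < n) (hk : k < n) :
    -1 ≤ ∑ i, Cvert n j i * Cvert n k i := by
  rcases lt_trichotomy j k with h | h | h
  · rw [← pair_lt n k j h hk]
    exact le_of_eq (sum_congr rfl fun i _ => by ring)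
  · subst h
    have : 0 ≤ ∑ i, Cvert n j i * Cvert n j i := sum_nonneg fun i _ => mul_self_nonneg _
    linarith
  · rw [pair_lt n j k h hj]

lemma halfspace_convex {d : ℕ} (v : Fin d → ℝ) (c : ℝ) :
    Convex ℝ {x : Fin d → ℝ | c ≤ ∑ i, x i * v i} := by
  apply convex_halfSpace_ge
  constructor
  · intro x y
    simp [add_mul, sum_add_distrib]
  · intro t x
    simp [mul_sum, mul_assoc]

lemma Q_iff (n : ℕ) (hn : 2 ≤ n) (x : Fin (n - 1) → ℝ) :
    x ∈ Qpoly n ↔ ∀ j < n, -1 ≤ ∑ i, x i * Cvert n j i := by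
  constructor
  · intro hx j hj
    have : Qpoly n ⊆ {x | -1 ≤ ∑ i, x i * Cvert n j i} := by
      refine convexHull_min ?_ (halfspace_convex _ _)
      rintro _ ⟨k, hk, rfl⟩
      exact pair_ge n k j (by omega) hj
    exact this hx
  · intro h
    have hx : x = ∑ j ∈ range n, (wgt n j * (1 + ∑ i, x i * Cvert n j i)) • Cvert n j := by
      funext b
      simp only [Finset.sum_apply, Pi.smul_apply, smul_eq_mul, mul_add, mul_one, add_mul,
        sum_add_distrib]
      rw [wgt_C, frame, zero_add]
    rw [hx]
    refine (convex_convexHull ℝ _).sum_mem ?_ ?_ ?_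
    · intro j hj
      have hj := mem_range.1 hj
      have := h j hj
      exact mul_nonneg (wgt_nonneg n j hj).le (by linarith)
    · simp only [mul_add, mul_one, sum_add_distrib]
      rw [wgt_total n hn, pair_zero, add_zero]
    · intro j hj
      have hj := mem_range.1 hj
      exact subset_convexHull ℝ _ ⟨j, by omega, rfl⟩

lemma Q_interior (n : ℕ) (hn : 2 ≤ n) (x : Fin (n - 1) → ℝ) (hx : x ∈ interior (Qpoly n))
    (j : ℕ) (hj : j < n) : -1 < ∑ i, x i * Cvert n j i := by
  have hc : Filter.Tendsto (fun t : ℝ => (1 + t) • x) (nhdsWithin 0 (Set.Ioi 0)) (nhds x) := by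
    have : Continuous (fun t : ℝ => (1 + t) • x) := by fun_prop
    have h := this.tendsto 0
    simp only [add_zero, one_smul] at h
    exact h.mono_left nhdsWithin_le_nhds
  have h1 := hc.eventually (mem_interior_iff_mem_nhds.1 hx)
  obtain ⟨t, ht, ht0⟩ := (h1.and self_mem_nhdsWithin).exists
  have ht0 : 0 < t := ht0
  have h2 := (Q_iff n hn _).1 ht j hj
  simp only [Pi.smul_apply, smul_eq_mul, mul_assoc] at h2
  rw [← mul_sum] at h2
  by_contra hcon
  push Not at hcon
  nlinarith

lemma C_int (n j : ℕ) (i : Fin (n - 1)) : ∃ m : ℤ, Cvert n j i = m := by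
  unfold Cvert
  split_ifs
  · exact ⟨1, by simp⟩
  · exact ⟨-((n : ℤ) - j), by push_cast; ring⟩
  · exact ⟨0, by simp⟩

lemma dual_iff (n : ℕ) (hn : 2 ≤ n) (y : Fin (n - 1) → ℝ) :
    y ∈ dualPoly (Qpoly n) ↔ -y ∈ Qpoly n := by
  rw [Q_iff n hn]
  have key : ∀ x : Fin (n - 1) → ℝ, ∑ i, x i * (-y) i = -∑ i, x i * y i := by
    intro x; simp
  constructor
  · intro h j hj
    have := h (Cvert n j) (subset_convexHull ℝ _ ⟨j, by omega, rfl⟩)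
    have e : ∑ i, (-y) i * Cvert n j i = ∑ i, Cvert n j i * (-y) i :=
      sum_congr rfl fun i _ => by ring
    rw [e, key]
    linarith
  · intro h x hx
    have : Qpoly n ⊆ {x | -1 ≤ ∑ i, x i * (-y) i} := by
      refine convexHull_min ?_ (halfspace_convex _ _)
      rintro _ ⟨k, hk, rfl⟩
      have := h k (by omega)
      have e : ∑ i, (-y) i * Cvert n k i = ∑ i, Cvert n k i * (-y) i :=
        sum_congr rfl fun i _ => by ring
      rw [e] at this
      exact this
    have h2 : -1 ≤ ∑ i, x i * (-y) i := this hx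
    rw [key] at h2
    linarith

/-- For every integer `n ≥ 2`, the simplex `Q_n` is reflexive: the
origin is the unique lattice point in the interior of `Q_n`, and every vertex
(extreme point) of the dual polytope `Q_n^∨` has all coordinates in `ℤ`. -/
theorem stmt_4 (n : ℕ) (hn : 2 ≤ n) :
    {x ∈ interior (Qpoly n) | ∀ i, ∃ m : ℤ, x i = (m : ℝ)} = {0} ∧
    ∀ y ∈ Set.extremePoints ℝ (dualPoly (Qpoly n)), ∀ i, ∃ m : ℤ, y i = (m : ℝ) := by
  refine ⟨?_, ?_⟩
  · apply Set.eq_singleton_iff_unique_mem.2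
    refine ⟨⟨?_, fun i => ⟨0, by simp⟩⟩, ?_⟩
    · have ho : IsOpen (⋂ j ∈ range n, {x : Fin (n - 1) → ℝ | -1 < ∑ i, x i * Cvert n j i}) := by
        refine isOpen_biInter_finset fun j _ => ?_
        exact isOpen_lt continuous_const (by fun_prop)
      refine interior_maximal ?_ ho ?_
      · intro x hx
        simp only [Set.mem_iInter, mem_range] at hx
        exact (Q_iff n hn x).2 fun j hj => le_of_lt (hx j hj)
      · simp
    · rintro x ⟨hx, hxi⟩
      have hnn : ∀ j < n, 0 ≤ ∑ i, x i * Cvert n j i := by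
        intro j hj
        have h1 := Q_interior n hn x hx j hj
        choose f hf using hxi
        choose g hg using C_int n j
        have e : ∑ i, x i * Cvert n j i = ((∑ i, f i * g i : ℤ) : ℝ) := by
          push_cast
          exact sum_congr rfl fun i _ => by rw [hf, hg]
        rw [e] at h1 ⊢
        have h2 : (-1 : ℤ) < ∑ i, f i * g i := by exact_mod_cast h1
        have h3 : (0 : ℤ) ≤ ∑ i, f i * g i := by omega
        exact_mod_cast h3
      have hz := (sum_eq_zero_iff_of_nonneg fun j hj =>
        mul_nonneg (wgt_nonneg n j (mem_range.1 hj)).le (hnn j (mem_range.1 hj))).1 (pair_zero n x)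
      funext b
      rw [← frame n x b]
      exact sum_eq_zero fun j hj => by rw [hz j hj, zero_mul]
  · intro y hy i
    have hd : dualPoly (Qpoly n) = convexHull ℝ (-{x | ∃ j ≤ n - 1, x = Cvert n j}) := by
      rw [convexHull_neg]
      ext z
      rw [dual_iff n hn, Set.mem_neg]
      rfl
    rw [hd] at hy
    obtain ⟨j, _, hj⟩ := extremePoints_convexHull_subset hy
    obtain ⟨m, hm⟩ := C_int n j i
    refine ⟨-m, ?_⟩
    have : (-y) i = m := by rw [hj, hm]
    push_cast
    rw [← this]
    simp
end

section
/- For every integer n ≥ 2, the simplex Q_n is unimodularly equivalent to its dual polytope Q_n^∨; that is, Q_n is self dual. -/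
open Finset

/-- Two polytopes `P₁, P₂ ⊂ ℝ^d` are *unimodularly equivalent* if there are a matrix
`U ∈ ℤ^{d×d}` with `det U = ±1` and a vector `v ∈ ℤ^d` with
`P₂ = {xU + v : x ∈ P₁}` (row vector times matrix: `(xU)_j = ∑ i, x_i U_{ij}`). -/
def UnimodEquiv {d : ℕ} (P₁ P₂ : Set (Fin d → ℝ)) : Prop :=
  ∃ (U : Matrix (Fin d) (Fin d) ℤ) (v : Fin d → ℤ),
    (U.det = 1 ∨ U.det = -1) ∧
    P₂ = (fun x : Fin d → ℝ => fun jc => (∑ i, x i * (U i jc : ℝ)) + (v jc : ℝ)) '' P₁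

namespace SelfDual

/-- Reindexed vertices. -/
noncomputable def V (d k : ℕ) : Fin d → ℝ := fun i =>
  if (i : ℕ) < k then 1 else if (i : ℕ) = k then -((k : ℝ) + 1) else 0

/-- Barycentric weights of the origin. -/
noncomputable def lam (d k : ℕ) : ℝ :=
  if k = d then 1 / ((d : ℝ) + 1) else 1 / (((k : ℝ) + 1) * ((k : ℝ) + 2))

lemma lam_nonneg (d k : ℕ) : 0 ≤ lam d k := by
  unfold lam; split_ifs <;> positivity

lemma tail_aux (l d : ℕ) (h : l < d) :
    ∑ k ∈ range d, (if l < k then 1 / (((k : ℝ) + 1) * ((k : ℝ) + 2)) else 0)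
      = 1 / ((l : ℝ) + 2) - 1 / ((d : ℝ) + 1) := by
  induction d, h using Nat.le_induction with
  | base =>
    rw [sum_eq_zero]
    · push_cast; ring
    · intro k hk
      rw [if_neg]
      simp at hk; omega
  | succ m hm ih =>
    rw [sum_range_succ, ih, if_pos (by omega)]
    push_cast
    field_simp
    ring

lemma tail (l d : ℕ) (h : l < d) :
    ∑ k ∈ range (d + 1), (if l < k then lam d k else 0) = 1 / ((l : ℝ) + 2) := by
  rw [sum_range_succ, if_pos h]
  have : ∑ k ∈ range d, (if l < k then lam d k else 0) =
      ∑ k ∈ range d, (if l < k then 1 / (((k : ℝ) + 1) * ((k : ℝ) + 2)) else 0) := by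
    refine sum_congr rfl fun k hk => ?_
    have : k ≠ d := by simp at hk; omega
    simp [lam, this]
  rw [this, tail_aux l d h]
  simp [lam]

lemma sum_lam (d : ℕ) : ∑ k ∈ range (d + 1), lam d k = 1 := by
  have aux : ∀ m : ℕ, ∑ k ∈ range m, 1 / (((k : ℝ) + 1) * ((k : ℝ) + 2))
      = 1 - 1 / ((m : ℝ) + 1) := by
    intro m
    induction m with
    | zero => simp
    | succ m ih => rw [sum_range_succ, ih]; push_cast; field_simp; ring
  rw [sum_range_succ]
  have : ∑ k ∈ range d, lam d k =
      ∑ k ∈ range d, 1 / (((k : ℝ) + 1) * ((k : ℝ) + 2)) := by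
    refine sum_congr rfl fun k hk => ?_
    have : k ≠ d := by simp at hk; omega
    simp [lam, this]
  rw [this, aux]
  simp [lam]

lemma general (d l : ℕ) (h : l < d) (c : ℝ) (f : ℕ → ℝ)
    (hf : ∀ k, f k = (if l < k then lam d k else 0) + (if k = l then c * lam d l else 0)) :
    ∑ k ∈ range (d + 1), f k = 1 / ((l : ℝ) + 2) + c * (1 / (((l : ℝ) + 1) * ((l : ℝ) + 2))) := by
  rw [sum_congr rfl (fun k _ => hf k), sum_add_distrib, tail l d h, sum_ite_eq', if_pos]
  · simp [lam, h.ne]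
  · simp; omega

lemma sum_lam_V (d : ℕ) (i : Fin d) : ∑ k ∈ range (d + 1), lam d k * V d k i = 0 := by
  rw [general d i i.2 (-((i : ℝ) + 1))]
  · field_simp; ring
  · intro k
    unfold V
    rcases lt_trichotomy (i : ℕ) k with h | h | h
    · simp [h, h.ne']
    · subst h; simp; ring
    · simp [h.ne, h.ne', not_lt.2 h.le]

lemma offdiag (d : ℕ) (i l : Fin d) (hil : (i : ℕ) < l) :
    ∑ k ∈ range (d + 1), lam d k * V d k i * V d k l = 0 := by
  rw [general d l l.2 (-((l : ℝ) + 1))]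
  · field_simp; ring
  · intro k
    unfold V
    rcases lt_trichotomy (l : ℕ) k with h | h | h
    · simp [h, h.ne', hil.trans h]
    · rw [← h]; simp [hil]; ring
    · simp [h.ne, h.ne', not_lt.2 h.le]

lemma diag (d : ℕ) (l : Fin d) :
    ∑ k ∈ range (d + 1), lam d k * V d k l * V d k l = 1 := by
  rw [general d l l.2 (((l : ℝ) + 1) ^ 2)]
  · field_simp; ring
  · intro k
    unfold V
    rcases lt_trichotomy (l : ℕ) k with h | h | h
    · simp [h, h.ne']
    · rw [← h]; simp; ring
    · simp [h.ne, h.ne', not_lt.2 h.le]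

lemma frame (d : ℕ) (i l : Fin d) :
    ∑ k ∈ range (d + 1), lam d k * V d k i * V d k l = if i = l then 1 else 0 := by
  rcases lt_trichotomy (i : ℕ) l with h | h | h
  · rw [offdiag d i l h, if_neg]; intro e; subst e; omega
  · have := Fin.ext h; subst this; simp [diag]
  · rw [if_neg (by intro e; subst e; omega), ← offdiag d l i h]
    exact sum_congr rfl fun k _ => by ring

lemma gram_lt (d j k : ℕ) (hjk : j < k) (hk : k ≤ d) :
    ∑ i, V d j i * V d k i = -1 := by
  have e : ∀ i : Fin d, V d j i * V d k i =
      (fun i : ℕ => (if i < j then (1 : ℝ) else 0) + (if i = j then -((j : ℝ) + 1) else 0)) i := by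
    intro i
    unfold V
    rcases lt_trichotomy (i : ℕ) j with h | h | h
    · simp [h, h.ne, h.trans hjk]
    · simp [h, hjk]
    · simp [h.ne', not_lt.2 h.le]
  rw [sum_congr rfl (fun i _ => e i), Fin.sum_univ_eq_sum_range
    (fun i : ℕ => (if i < j then (1 : ℝ) else 0) + (if i = j then -((j : ℝ) + 1) else 0)) d, sum_add_distrib, sum_ite_eq',
    if_pos (by simp; omega), ← sum_filter]
  have : (range d).filter (fun i => i < j) = range j := by
    ext x; simp; omega
  rw [this]; simp

lemma gram (d j k : ℕ) (hj : j ≤ d) (hk : k ≤ d) :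
    -1 ≤ ∑ i, V d j i * V d k i := by
  rcases lt_trichotomy j k with h | h | h
  · rw [gram_lt d j k h hk]
  · subst h
    have : 0 ≤ ∑ i, V d j i * V d j i := sum_nonneg fun i _ => mul_self_nonneg _
    linarith
  · rw [← gram_lt d k j h hj]
    exact le_of_eq (sum_congr rfl fun i _ => by ring)

lemma Cvert_eq (d j : ℕ) (hj : j ≤ d) : Cvert (d + 1) j = V d (d - j) := by
  funext i
  have hi : (i : ℕ) < d := i.2
  have h1 : (i : ℕ) + 1 < d + 1 - j ↔ (i : ℕ) < d - j := by omega
  have h2 : (i : ℕ) + 1 = d + 1 - j ↔ (i : ℕ) = d - j := by omega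
  simp only [Cvert, V, h1, h2]
  push_cast [Nat.cast_sub hj]
  congr 2
  ring

lemma Q_eq (d : ℕ) : Qpoly (d + 1) = convexHull ℝ {x : Fin d → ℝ | ∃ k ≤ d, x = V d k} := by
  unfold Qpoly
  congr 1
  ext x
  constructor
  · rintro ⟨j, hj, rfl⟩
    exact ⟨d - j, by omega, Cvert_eq d j hj⟩
  · rintro ⟨k, hk, rfl⟩
    refine ⟨d - k, by simp, ?_⟩
    rw [Cvert_eq d _ (by omega), Nat.sub_sub_self hk]

lemma convex_half {d : ℕ} (y : Fin d → ℝ) (c : ℝ) :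
    Convex ℝ {x : Fin d → ℝ | c ≤ ∑ i, x i * y i} := by
  refine convex_halfSpace_ge ⟨?_, ?_⟩ c
  · intro a b; simp [add_mul, sum_add_distrib]
  · intro a b; simp [mul_sum, mul_assoc]

lemma pair (d : ℕ) (x y : Fin d → ℝ)
    (hx : x ∈ convexHull ℝ {x : Fin d → ℝ | ∃ k ≤ d, x = V d k})
    (hy : y ∈ convexHull ℝ {x : Fin d → ℝ | ∃ k ≤ d, x = V d k}) :
    -1 ≤ ∑ i, x i * y i := by
  refine convexHull_min ?_ (convex_half y (-1)) hx
  rintro _ ⟨k, hk, rfl⟩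
  have : y ∈ {y : Fin d → ℝ | -1 ≤ ∑ i, y i * V d k i} := by
    refine convexHull_min ?_ (convex_half _ (-1)) hy
    rintro _ ⟨j, hj, rfl⟩
    exact gram d j k hj hk
  simp only [Set.mem_ofPred_eq] at this ⊢
  simpa only [mul_comm] using this

lemma mem_of (d : ℕ) (x : Fin d → ℝ) (h : ∀ k ≤ d, -1 ≤ ∑ i, V d k i * x i) :
    x ∈ convexHull ℝ {x : Fin d → ℝ | ∃ k ≤ d, x = V d k} := by
  have h0 : ∑ k ∈ range (d + 1), lam d k * ∑ i, V d k i * x i = 0 := by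
    simp_rw [mul_sum]
    rw [sum_comm]
    refine sum_eq_zero fun i _ => ?_
    simp_rw [← mul_assoc]
    rw [← sum_mul, sum_lam_V, zero_mul]
  have hx : x = ∑ k ∈ range (d + 1), (lam d k * (1 + ∑ i, V d k i * x i)) • V d k := by
    funext l
    rw [Finset.sum_apply]
    simp only [Pi.smul_apply, smul_eq_mul, mul_add, mul_one, add_mul, sum_add_distrib, sum_lam_V,
      zero_add]
    simp_rw [mul_sum, sum_mul]
    rw [sum_comm]
    have : ∀ i : Fin d, ∑ k ∈ range (d + 1), lam d k * (V d k i * x i) * V d k l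
        = if i = l then x i else 0 := by
      intro i
      have := congrArg (· * x i) (frame d i l)
      simp only [sum_mul, ite_mul, one_mul, zero_mul] at this
      rw [← this]
      exact sum_congr rfl fun k _ => by ring
    simp [this]
  rw [hx]
  refine (convex_convexHull ℝ _).sum_mem ?_ ?_ ?_
  · intro k hk
    have := h k (by simp at hk; omega)
    exact mul_nonneg (lam_nonneg d k) (by linarith)
  · simp only [mul_add, mul_one, sum_add_distrib, h0, sum_lam, add_zero]
  · intro k hk
    exact subset_convexHull ℝ _ ⟨k, by simp at hk; omega, rfl⟩

lemma main (d : ℕ) : UnimodEquiv (d := d) (Qpoly (d + 1)) (dualPoly (d := d) (Qpoly (d + 1))) := by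
  refine ⟨-1, 0, ?_, ?_⟩
  · rw [Matrix.det_neg]
    simpa using neg_one_pow_eq_or ℤ d
  · have hf : (fun x : Fin d → ℝ => fun jc =>
        (∑ i, x i * (((-1 : Matrix (Fin d) (Fin d) ℤ) i jc : ℤ) : ℝ))
          + (((0 : Fin d → ℤ) jc : ℤ) : ℝ)) = fun x => -x := by
      funext x jc
      simp [Matrix.one_apply]
    rw [hf]
    ext y
    rw [Q_eq]
    constructor
    · intro hy
      refine ⟨-y, mem_of d _ fun k hk => ?_, neg_neg y⟩
      have := hy (V d k) (subset_convexHull ℝ _ ⟨k, hk, rfl⟩)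
      simp only [Pi.neg_apply, mul_neg, sum_neg_distrib]
      linarith
    · rintro ⟨x, hx, rfl⟩ z hz
      have := pair d z x hz hx
      simp only [Pi.neg_apply, mul_neg, sum_neg_distrib]
      linarith

end SelfDual

/-- For every integer `n ≥ 2`, the simplex `Q_n` is unimodularly
equivalent to its dual polytope `Q_n^∨`; that is, `Q_n` is self dual. -/
theorem stmt_5 (n : ℕ) (hn : 2 ≤ n) :
    UnimodEquiv (Qpoly n) (dualPoly (Qpoly n)) := by
  obtain ⟨d, rfl⟩ : ∃ d, n = d + 1 := ⟨n - 1, by omega⟩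
  exact SelfDual.main d
end

section
/- For every integer n ≥ 2, the normalized volume of Q_n equals n!; equivalently, the Euclidean (Lebesgue) volume of the (n−1)-dimensional simplex Q_n ⊂ ℝ^{n−1} equals n!/(n−1)! = n. -/
open Finset

open MeasureTheory

def corner (m : ℕ) (t : ℝ) : Set (Fin m → ℝ) := {x | (∀ i, 0 ≤ x i) ∧ ∑ i, x i ≤ t}

lemma corner_closed (m : ℕ) (t : ℝ) : IsClosed (corner m t) := by
  unfold corner
  rw [Set.ofPred_and, Set.ofPred_forall]
  refine IsClosed.inter (isClosed_iInter fun i => ?_) ?_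
  · exact isClosed_le continuous_const (continuous_apply i)
  · exact isClosed_le (by fun_prop) continuous_const

lemma corner_volume (m : ℕ) : ∀ t : ℝ, 0 ≤ t →
    volume (corner m t) = ENNReal.ofReal (t ^ m / m.factorial) := by
  induction m with
  | zero =>
    intro t ht
    have : corner 0 t = Set.univ := by
      ext x; simp [corner, ht]
    rw [this, volume_pi, Measure.pi_univ]
    simp
  | succ m ih =>
    intro t ht
    have h := (volume_preserving_piFinSuccAbove (fun _ : Fin (m+1) => ℝ) 0).symm
    rw [← h.measure_preimage_equiv, Measure.volume_eq_prod, Measure.prod_apply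
      (h.measurable (corner_closed _ _).measurableSet)]
    have h2 : ∀ a : ℝ, volume (Prod.mk a ⁻¹' ((MeasurableEquiv.piFinSuccAbove (fun _ : Fin (m+1) => ℝ) 0).symm ⁻¹' corner (m+1) t))
        = (Set.Icc 0 t).indicator (fun a => ENNReal.ofReal ((t - a) ^ m / m.factorial)) a := by
      intro a
      have key : (Prod.mk a ⁻¹' ((MeasurableEquiv.piFinSuccAbove (fun _ : Fin (m+1) => ℝ) 0).symm ⁻¹' corner (m+1) t))
        = {x | 0 ≤ a ∧ x ∈ corner m (t - a)} := by
        ext x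
        simp [corner, MeasurableEquiv.piFinSuccAbove, Fin.forall_fin_succ, Fin.sum_univ_succ, and_assoc, le_sub_iff_add_le']
      rw [key]
      by_cases ha : a ∈ Set.Icc 0 t
      · rw [Set.indicator_of_mem ha, ← ih (t - a) (by linarith [ha.2])]
        simp [ha.1]
      · rw [Set.indicator_of_notMem ha]
        convert measure_empty (μ := volume)
        ext x
        simp only [Set.mem_ofPred_eq, Set.mem_empty_iff_false, iff_false]
        rintro ⟨h0, h1, h2⟩
        exact ha ⟨h0, by linarith [Finset.sum_nonneg (fun i (_ : i ∈ Finset.univ) => h1 i)]⟩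
    simp_rw [h2]
    rw [lintegral_indicator measurableSet_Icc, ← ofReal_integral_eq_lintegral_ofReal]
    · rw [integral_Icc_eq_integral_Ioc, ← intervalIntegral.integral_of_le ht]
      congr 1
      rw [intervalIntegral.integral_comp_sub_left (fun x => x ^ m / (m.factorial : ℝ)) t]
      rw [intervalIntegral.integral_div, integral_pow]
      simp [Nat.factorial_succ]
      field_simp
    · exact (Continuous.integrableOn_Icc (by fun_prop))
    · refine (ae_restrict_iff' measurableSet_Icc).2 (Filter.Eventually.of_forall fun a ha => ?_)
      have : 0 ≤ t - a := by linarith [ha.2]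
      show 0 ≤ (t - a) ^ m / (m.factorial : ℝ)
      positivity

lemma corner_hull (m : ℕ) : corner m 1 =
    convexHull ℝ (insert 0 (Set.range fun i : Fin m => (Pi.single i 1 : Fin m → ℝ))) := by
  apply Set.Subset.antisymm
  · rintro x ⟨h0, h1⟩
    have hc := convex_convexHull ℝ (insert 0 (Set.range fun i : Fin m => (Pi.single i 1 : Fin m → ℝ)))
    have := hc.sum_mem (t := Finset.univ) (w := fun o : Option (Fin m) => o.elim (1 - ∑ i, x i) x)
      (z := fun o : Option (Fin m) => o.elim 0 (fun i => Pi.single i 1)) ?_ ?_ ?_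
    · convert this
      rw [Fintype.sum_option]
      ext j
      simp [Finset.sum_apply, Pi.single_apply]
    · rintro (_ | i) _
      · simpa using h1
      · exact h0 i
    · rw [Fintype.sum_option]; simp
    · rintro (_ | i) _
      · exact subset_convexHull _ _ (by simp)
      · exact subset_convexHull _ _ (by simp)
  · apply convexHull_min
    · rintro x (rfl | ⟨i, rfl⟩)
      · simp [corner]
      · refine ⟨fun j => ?_, by simp⟩
        simp only [Pi.single_apply]; split_ifs <;> norm_num
    · rintro x ⟨hx0, hx1⟩ y ⟨hy0, hy1⟩ a b ha hb hab
      refine ⟨fun i => ?_, ?_⟩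
      · have := hx0 i
        have := hy0 i
        simp only [Pi.add_apply, Pi.smul_apply, smul_eq_mul]; positivity
      · simp only [Pi.add_apply, Pi.smul_apply, smul_eq_mul, Finset.sum_add_distrib, ← Finset.mul_sum]
        nlinarith

def MM (m : ℕ) : Matrix (Fin m) (Fin m) ℝ := Matrix.of fun i k =>
  if i < k then 0 else if i = k then -((k : ℝ) + 2) else -1

lemma MM_det (m : ℕ) : |(MM m).det| = ((m + 1).factorial : ℝ) := by
  rw [Matrix.det_of_isLowerTriangular]
  · rw [Finset.abs_prod]
    have : ∀ i : Fin m, |MM m i i| = (((i : ℕ) + 2 : ℕ) : ℝ) := by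
      intro i
      simp only [MM, Matrix.of_apply, lt_irrefl, if_false, if_true, abs_neg]
      rw [abs_of_nonneg (by positivity)]; simp
    simp_rw [this]
    rw [Fin.prod_univ_eq_prod_range (fun i => ((i + 2 : ℕ) : ℝ)) m]
    induction m with
    | zero => simp
    | succ m ih =>
      rw [Finset.prod_range_succ, ih (by
        intro i
        simp only [MM, Matrix.of_apply, lt_irrefl, if_false, if_true, abs_neg]
        rw [abs_of_nonneg (by positivity)]; simp), Nat.factorial_succ (m+1)]
      push_cast; ring
  · intro i j hij
    have : i < j := hij
    simp [MM, this]

noncomputable def CV (m j : ℕ) : Fin m → ℝ := Cvert (m + 1) j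

noncomputable def QQ (m : ℕ) : Set (Fin m → ℝ) := convexHull ℝ {x | ∃ j ≤ m, x = CV m j}

lemma Cvert_sub (m : ℕ) (k : Fin m) :
    CV m (m - k) = CV m 0 + (MM m).mulVec (Pi.single k 1) := by
  ext i
  have hk := k.2
  have hi : (i : ℕ) < m := i.2
  have e : m + 1 - (m - (k : ℕ)) = k + 1 := by omega
  have e2 : ((m - (k : ℕ) : ℕ) : ℝ) = (m : ℝ) - k := by
    rw [Nat.cast_sub hk.le]
  rw [Matrix.mulVec_single_one]
  simp only [CV, Cvert, Pi.add_apply, MM, Matrix.col_apply, Matrix.of_apply, e, e2]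
  have h0 : (i : ℕ) + 1 < m + 1 - 0 := by omega
  rw [if_pos h0]
  rcases lt_trichotomy (i : ℕ) (k : ℕ) with h | h | h
  · have h' : i < k := h
    simp [h]
    intro hh; exact absurd (lt_of_lt_of_le h (Fin.le_def.1 hh)) (lt_irrefl _)
  · have h' : i = k := Fin.ext h
    subst h'
    simp
    ring
  · have h1 : ¬ ((i : ℕ) + 1 < k + 1) := by omega
    have h2 : ¬ ((i : ℕ) + 1 = k + 1) := by omega
    have h3 : ¬ (i < k) := fun hh => absurd (Fin.lt_def.1 hh) (not_lt.2 h.le)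
    have h4 : ¬ (i = k) := fun hh => by
      have := congrArg Fin.val hh
      exact absurd this h.ne'
    rw [if_neg h1, if_neg h2, if_neg h3, if_neg h4]
    norm_num

lemma Qpoly_eq (m : ℕ) : QQ m =
    (fun x => CV m 0 + x) '' ((Matrix.toLin' (MM m)) '' corner m 1) := by
  have hs : {x | ∃ j ≤ m, x = CV m j} =
      (fun x : Fin m → ℝ => CV m 0 + x) '' ((Matrix.toLin' (MM m)) ''
        (insert 0 (Set.range fun i : Fin m => (Pi.single i 1 : Fin m → ℝ)))) := by
    rw [Set.image_insert_eq, Set.image_insert_eq, ← Set.range_comp, ← Set.range_comp]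
    ext x
    simp only [Set.mem_ofPred_eq, Set.mem_insert_iff, Set.mem_range, Function.comp,
      Matrix.toLin'_apply, Matrix.mulVec_zero, add_zero]
    constructor
    · rintro ⟨j, hj, rfl⟩
      rcases Nat.eq_zero_or_pos j with rfl | hpos
      · left; rfl
      · right
        refine ⟨⟨m - j, by omega⟩, ?_⟩
        rw [← Cvert_sub]
        congr 1
        simp only
        omega
    · rintro (rfl | ⟨k, rfl⟩)
      · exact ⟨0, by omega, rfl⟩
      · exact ⟨m - k, by omega, (Cvert_sub m k).symm⟩
  unfold QQ
  rw [hs, corner_hull, LinearMap.image_convexHull]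
  have := (AffineEquiv.constVAdd ℝ (Fin m → ℝ) (CV m 0)).toAffineMap.image_convexHull
    ((Matrix.toLin' (MM m)) '' (insert 0 (Set.range fun i : Fin m => (Pi.single i 1 : Fin m → ℝ))))
  exact this.symm

theorem Qvol (m : ℕ) : volume (QQ m) = ((m + 1 : ℕ) : ENNReal) := by
  rw [Qpoly_eq]
  have h1 : volume ((fun x : Fin m → ℝ => CV m 0 + x) '' ((Matrix.toLin' (MM m)) '' corner m 1))
      = volume ((Matrix.toLin' (MM m)) '' corner m 1) := by
    rw [Set.image_add_left, measure_preimage_add]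
  refine h1.trans ?_
  rw [Measure.addHaar_image_linearMap, LinearMap.det_toLin', MM_det, corner_volume m 1 zero_le_one,
    ← ENNReal.ofReal_mul (by positivity), ← ENNReal.ofReal_natCast]
  congr 1
  rw [Nat.factorial_succ]
  push_cast
  field_simp
  simp

/-- For every integer `n ≥ 2`, the normalized volume of `Q_n`, i.e.
`(n-1)!` times the Euclidean (Lebesgue) volume of the `(n-1)`-dimensional simplex
`Q_n ⊂ ℝ^{n-1}`, equals `n!`; equivalently its Euclidean volume is `n!/(n-1)! = n`. -/
theorem stmt_6 (n : ℕ) (hn : 2 ≤ n) :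
    ((n - 1).factorial : ENNReal) * MeasureTheory.volume (Qpoly n) = (n.factorial : ENNReal) ∧
    MeasureTheory.volume (Qpoly n) = (n : ENNReal) := by
  obtain ⟨m, rfl⟩ : ∃ m, n = m + 1 := ⟨n - 1, by omega⟩
  have h : volume (Qpoly (m + 1)) = ((m + 1 : ℕ) : ENNReal) := Qvol m
  refine ⟨?_, h⟩
  rw [h, Nat.add_sub_cancel, Nat.factorial_succ, mul_comm, Nat.cast_mul]
end

section
/- For every integer n ≥ 2, the pyramid Pyr(Q_n) = conv(Q_n × {0}, (0,…,0,1)) ⊂ ℝ^n is unimodularly equivalent to the n-dimensional lecture hall simplex R_n = conv{v_0, v_1, …, v_n} ⊂ ℝ^n, where v_0 = 0 and, for 1 ≤ j ≤ n, (v_j)_i = i for n−j+1 ≤ i ≤ n and (v_j)_i = 0 for i ≤ n−j. -/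
open Finset

/-- The pyramid `Pyr(P) = conv(P × {0}, (0,…,0,1)) ⊂ ℝ^{d+1}` over `P ⊂ ℝ^d`. -/
noncomputable def pyr {d : ℕ} (P : Set (Fin d → ℝ)) : Set (Fin (d + 1) → ℝ) :=
  convexHull ℝ
    ((fun x : Fin d → ℝ => Fin.snoc x 0) '' P ∪ {Fin.snoc (0 : Fin d → ℝ) 1})

/-- The vertex `v_j` of the lecture hall simplex `R_n ⊂ ℝ^n`:
`(v_j)_i = i` (1-based coordinate value) for `n - j + 1 ≤ i ≤ n` and `(v_j)_i = 0`
for `i ≤ n - j`; in particular `v_0 = 0`. -/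
noncomputable def vvert (n j : ℕ) : Fin n → ℝ := fun i =>
  if n - j + 1 ≤ (i : ℕ) + 1 then (((i : ℕ) + 1 : ℕ) : ℝ) else 0

/-- The lecture hall simplex `R_n = conv{v_0, v_1, …, v_n} ⊂ ℝ^n`. -/
noncomputable def Rsimplex (n : ℕ) : Set (Fin n → ℝ) :=
  convexHull ℝ {x | ∃ j ≤ n, x = vvert n j}


/-- The integer matrix realising the equivalence. -/
def lhU (m : ℕ) : Matrix (Fin (m + 1)) (Fin (m + 1)) ℤ := fun i c =>
  if (i : ℕ) = m then 1 else if (i : ℕ) < c then -1 else 0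

lemma lhU_det (m : ℕ) : (lhU m).det = 1 ∨ (lhU m).det = -1 := by
  rw [Matrix.det_succ_column_zero, Fin.sum_univ_castSucc]
  have h0 : ∀ i : Fin m, lhU m i.castSucc 0 = 0 := by
    intro i
    have := i.2
    simp [lhU, this.ne]
  have ht : ((lhU m).submatrix (Fin.last m).succAbove Fin.succ).BlockTriangular id := by
    intro i j hij
    have hi := i.2
    have hij' : (j : ℕ) < i := hij
    simp only [Matrix.submatrix_apply, Fin.succAbove_last, lhU, Fin.val_castSucc, Fin.val_succ]
    rw [if_neg hi.ne, if_neg (by omega)]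
  have hd : ∀ i : Fin m, (lhU m) i.castSucc i.succ = -1 := by
    intro i
    have hi := i.2
    simp [lhU, hi.ne]
  rw [Matrix.det_of_isUpperTriangular ht]
  simp only [h0, Matrix.submatrix_apply, Fin.succAbove_last, hd]
  have hl : lhU m (Fin.last m) 0 = 1 := by simp [lhU]
  simp only [hl, mul_zero, zero_mul, sum_const_zero, zero_add, mul_one, Fin.val_last, prod_const,
    card_univ, Fintype.card_fin, ← mul_pow]
  left
  simp

lemma lh_sum (k : ℕ) (hk : 1 ≤ k) (c : ℕ) :
    ∑ i ∈ range c, (if i + 1 < k then (1 : ℝ) else if i + 1 = k then -(k : ℝ) else 0)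
      = if c < k then (c : ℝ) else -1 := by
  induction c with
  | zero => simp; omega
  | succ c ih =>
    rw [sum_range_succ, ih]
    rcases lt_trichotomy (c + 1) k with h | h | h
    · simp [h, show c < k by omega]
    · subst h
      simp
    · simp [show ¬ c < k by omega, show ¬ c + 1 < k by omega, show c + 1 ≠ k by omega]

lemma lh_vertex (m j : ℕ) (hj : j ≤ m) (c : Fin (m + 1)) :
    (∑ i : Fin m, Cvert (m + 1) j i * ((lhU m i.castSucc c : ℤ) : ℝ)) + ((c : ℕ) : ℝ)
      = vvert (m + 1) j c := by
  have hc := c.2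
  obtain ⟨F, hF⟩ : ∃ F : ℕ → ℝ, F = fun i : ℕ => if i < c then -(if i + 1 < m + 1 - j then (1 : ℝ) else
        if i + 1 = m + 1 - j then -((m + 1 - j : ℕ) : ℝ) else 0) else 0 := ⟨_, rfl⟩
  have h1 : ∀ i : Fin m, Cvert (m + 1) j i * ((lhU m i.castSucc c : ℤ) : ℝ) =
      F i := by
    intro i
    have hi := i.2
    simp only [hF, Cvert, lhU, Fin.val_castSucc, if_neg hi.ne]
    rw [Nat.cast_sub (by omega : j ≤ m + 1)]
    split_ifs <;> simp
  rw [(Finset.sum_congr rfl (fun i _ => h1 i)).trans (Fin.sum_univ_eq_sum_range F m),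
    hF, ← sum_filter]
  have h2 : (range m).filter (fun i => i < (c : ℕ)) = range c := by
    ext i
    simp only [mem_filter, mem_range]
    omega
  rw [h2, sum_neg_distrib, lh_sum _ (by omega)]
  simp only [vvert]
  by_cases h : (c : ℕ) < m + 1 - j
  · rw [if_pos h, if_neg (by omega)]; ring
  · rw [if_neg h, if_pos (by omega)]; push_cast; ring

lemma lh_main (m : ℕ) : UnimodEquiv (pyr (Qpoly (m + 1))) (Rsimplex (m + 1)) := by
  refine ⟨lhU m, fun c => ((c : ℕ) : ℤ), lhU_det m, ?_⟩
  -- the affine map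
  let L : (Fin (m + 1) → ℝ) →ₗ[ℝ] (Fin (m + 1) → ℝ) :=
    Matrix.vecMulLinear ((lhU m).map (fun z : ℤ => (z : ℝ)))
  let A : (Fin (m + 1) → ℝ) →ᵃ[ℝ] (Fin (m + 1) → ℝ) :=
    L.toAffineMap + AffineMap.const ℝ _ (fun c : Fin (m + 1) => ((c : ℕ) : ℝ))
  have hA : (fun x : Fin (m + 1) → ℝ => fun jc => (∑ i, x i * (lhU m i jc : ℝ)) +
      ((((jc : ℕ) : ℤ)) : ℝ)) = A := by
    funext x jc
    simp [A, L, Matrix.vecMul, dotProduct]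
  let S : (Fin m → ℝ) →ₗ[ℝ] (Fin (m + 1) → ℝ) :=
    { toFun := fun x => Fin.snoc x 0
      map_add' := by
        intro x y
        funext i
        refine Fin.lastCases ?_ (fun i => ?_) i <;> simp
      map_smul' := by
        intro r x
        funext i
        refine Fin.lastCases ?_ (fun i => ?_) i <;> simp }
  have hS : pyr (Qpoly (m + 1)) = convexHull ℝ
      (S '' {x | ∃ j ≤ m, x = Cvert (m + 1) j} ∪ {Fin.snoc (0 : Fin m → ℝ) 1}) := by
    rw [← convexHull_convexHull_union_left, ← LinearMap.image_convexHull]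
    rfl
  rw [hS]
  erw [hA]
  rw [AffineMap.image_convexHull, Rsimplex]
  have key : ∀ j ≤ m, A (S (Cvert (m + 1) j)) = vvert (m + 1) j := by
    intro j hj
    rw [← hA]
    funext c
    rw [← lh_vertex m j hj c]
    simp [S, Fin.sum_univ_castSucc]
    try rfl
  have apex : A (Fin.snoc (0 : Fin m → ℝ) 1 : Fin (m + 1) → ℝ) = vvert (m + 1) (m + 1) := by
    rw [← hA]
    funext c
    simp [Fin.sum_univ_castSucc, vvert, lhU]
    try ring
  congr 1
  ext y
  constructor
  · rintro ⟨j, hj, rfl⟩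
    rcases Nat.lt_or_ge m j with h | h
    · obtain rfl : j = m + 1 := by omega
      exact ⟨_, Or.inr rfl, apex⟩
    · exact ⟨_, Or.inl ⟨_, ⟨j, h, rfl⟩, rfl⟩, key j h⟩
  · rintro ⟨_, ⟨_, ⟨j, hj, rfl⟩, rfl⟩ | h, rfl⟩
    · exact ⟨j, by omega, key j hj⟩
    · rw [Set.mem_singleton_iff.1 h]
      exact ⟨m + 1, le_rfl, apex⟩

/-- For every integer `n ≥ 2`, the pyramid
`Pyr(Q_n) = conv(Q_n × {0}, (0,…,0,1)) ⊂ ℝ^n` is unimodularly equivalent to the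
`n`-dimensional lecture hall simplex `R_n` (here `n = (n-1)+1` since `n ≥ 2`). -/
theorem stmt_8 (n : ℕ) (hn : 2 ≤ n) :
    UnimodEquiv (pyr (Qpoly n)) (Rsimplex (n - 1 + 1)) := by
  obtain ⟨m, rfl⟩ : ∃ m, n = m + 1 := ⟨n - 1, by omega⟩
  exact lh_main m
end

section
/- For every integer n ≥ 2, the δ-polynomial of Q_n equals the n-th Eulerian polynomial A_n(z) = Σ_{σ ∈ S_n} z^{des(σ)}; equivalently, as formal power series in z, (1 − z)^n · ( Σ_{k ≥ 0} #(kQ_n ∩ ℤ^{n−1}) · z^k ) = Σ_{σ ∈ S_n} z^{des(σ)}, where the k = 0 term of the sum is 1. -/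
open Finset Pointwise

/-- The lattice point enumerator `i(Q_n, k) = #(kQ_n ∩ ℤ^{n-1})` (for `k = 0` this
equals `1`, since `0·Q_n = {0}`). -/
noncomputable def latticeCount (n k : ℕ) : ℕ :=
  Set.ncard {x : Fin (n - 1) → ℤ | (fun i => (x i : ℝ)) ∈ (k : ℝ) • Qpoly n}

/-- The number of descents of a permutation `σ` of `{1, …, n}`: the number of indices
`1 ≤ i ≤ n-1` with `σ(i) > σ(i+1)`, counted here as the number of pairs of adjacent
positions `(p₁, p₂)` with `p₂ = p₁ + 1` and `σ p₂ < σ p₁`. -/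
def descents (n : ℕ) (σ : Equiv.Perm (Fin n)) : ℕ :=
  (Finset.univ.filter (fun p : Fin n × Fin n =>
    (p.2 : ℕ) = (p.1 : ℕ) + 1 ∧ σ p.2 < σ p.1)).card

/-- Number of integer sequences `T_0 = k, …, T_n = t` with `T_i/(i+1)` weakly decreasing. -/
def cnt : ℕ → ℕ → ℕ → ℕ
  | 0, k, t => if k = t then 1 else 0
  | n + 1, k, t => ∑ s ∈ Finset.range ((n + 1) * k + 1),
      if (n + 1) * t ≤ (n + 2) * s then cnt n k s else 0

lemma cnt_eq_zero (n k t : ℕ) (h : (n + 1) * k < t) : cnt n k t = 0 := by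
  cases n with
  | zero => simp only [cnt]; rw [if_neg]; omega
  | succ n =>
    simp only [cnt]
    apply Finset.sum_eq_zero
    intro s hs
    rw [if_neg]
    rw [Finset.mem_range] at hs
    intro h2
    have : s ≤ (n + 1) * k := by omega
    nlinarith

lemma cnt_shift (n : ℕ) : ∀ k s, cnt n (k + 1) (n + 1 + s) = cnt n k s := by
  induction n with
  | zero => intro k s; simp only [cnt]; congr 1; simp; omega
  | succ n ih =>
    intro k t
    simp only [cnt]
    rw [show (n + 1) * (k + 1) + 1 = (n + 1) + ((n + 1) * k + 1) by ring, Finset.sum_range_add]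
    rw [Finset.sum_eq_zero, zero_add]
    · apply Finset.sum_congr rfl
      intro s _
      rw [ih]
      congr 1
      apply propext
      constructor <;> intro h <;> nlinarith
    · intro s hs
      rw [Finset.mem_range] at hs
      rw [if_neg]
      intro h
      nlinarith

lemma cnt_succ (n k t : ℕ) (ht : t ≤ n + 1) :
    cnt (n + 1) k t = ∑ s ∈ Finset.range ((n + 1) * k + 1), if t ≤ s then cnt n k s else 0 := by
  simp only [cnt]
  apply Finset.sum_congr rfl
  intro s _
  congr 1
  apply propext
  constructor
  · intro h
    by_contra h2
    push Not at h2
    have : s + 1 ≤ t := h2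
    nlinarith
  · intro h
    nlinarith

lemma cnt_rec_zero (n t : ℕ) (ht : t ≤ n + 1) :
    cnt (n + 1) 0 t = ∑ r ∈ Finset.range (n + 1), if r < t then 0 else cnt n 0 r := by
  rw [cnt_succ n 0 t ht]
  rw [Finset.sum_subset (s₂ := Finset.range (n + 1))]
  · apply Finset.sum_congr rfl
    intro r _
    split_ifs <;> first | rfl | omega
  · intro x; simp only [Finset.mem_range]; omega
  · intro x hx hx2
    simp at hx2
    rw [cnt_eq_zero n 0 x (by omega)]; simp

lemma cnt_rec (n k t : ℕ) (ht : t ≤ n + 1) :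
    cnt (n + 1) (k + 1) t = cnt (n + 1) k t +
      ∑ r ∈ Finset.range (n + 1), if r < t then cnt n k r else cnt n (k + 1) r := by
  have h1 : ∑ r ∈ Finset.range (n + 1), (if r < t then cnt n k r else cnt n (k + 1) r) =
      ∑ r ∈ Finset.range (n + 1), (if r < t then cnt n k r else 0) +
      ∑ r ∈ Finset.range (n + 1), (if t ≤ r then cnt n (k + 1) r else 0) := by
    rw [← Finset.sum_add_distrib]
    apply Finset.sum_congr rfl
    intro r _
    split_ifs <;> first | omega | simp
  have h2 : ∑ r ∈ Finset.range (n + 1), (if r < t then cnt n k r else 0) =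
      ∑ r ∈ Finset.range ((n + 1) * k + 1), (if r < t then cnt n k r else 0) := by
    trans ∑ r ∈ Finset.range ((n + 1) + ((n + 1) * k + 1)), (if r < t then cnt n k r else 0)
    · apply Finset.sum_subset
      · intro x; simp; omega
      · intro x _ hx
        simp at hx
        rw [if_neg]; omega
    · symm
      apply Finset.sum_subset
      · intro x; simp only [Finset.mem_range]; omega
      · intro x _ hx
        simp only [Finset.mem_range] at hx
        rw [cnt_eq_zero n k x (by omega)]; simp
  rw [cnt_succ n (k + 1) t ht, cnt_succ n k t ht, h1, h2]
  rw [show (n + 1) * (k + 1) + 1 = (n + 1) + ((n + 1) * k + 1) by ring, Finset.sum_range_add]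
  rw [add_comm, ← add_assoc, ← Finset.sum_add_distrib]
  congr 1
  apply Finset.sum_congr rfl
  intro s _
  rw [cnt_shift, if_pos (by omega)]
  split_ifs <;> first | omega | simp

noncomputable def Fs (n t : ℕ) : PowerSeries ℚ := PowerSeries.mk (fun k => (cnt n k t : ℚ))

lemma Fs_rec (n t : ℕ) (ht : t ≤ n + 1) :
    (1 - PowerSeries.X) * Fs (n + 1) t =
      ∑ r ∈ Finset.range (n + 1), (if r < t then PowerSeries.X else 1) * Fs n r := by
  ext k
  rw [map_sum, sub_mul, one_mul, map_sub]
  cases k with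
  | zero =>
    simp only [Fs, PowerSeries.coeff_mk, PowerSeries.coeff_zero_X_mul, sub_zero]
    rw [cnt_rec_zero n t ht, Nat.cast_sum]
    apply Finset.sum_congr rfl
    intro r _
    split_ifs <;> simp
  | succ k =>
    simp only [Fs, PowerSeries.coeff_mk, PowerSeries.coeff_succ_X_mul]
    rw [cnt_rec n k t ht, Nat.cast_add, Nat.cast_sum, add_sub_cancel_left]
    apply Finset.sum_congr rfl
    intro r _
    split_ifs <;> simp [PowerSeries.coeff_succ_X_mul]

/-- Build a permutation from its first value and the standardization of the rest. -/
def consPerm (n : ℕ) (p : Fin (n + 1)) (e : Equiv.Perm (Fin n)) : Equiv.Perm (Fin (n + 1)) :=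
  ((finSuccEquiv' 0).trans (Equiv.optionCongr e)).trans (finSuccEquiv' p).symm

lemma consPerm_zero (n : ℕ) (p : Fin (n + 1)) (e : Equiv.Perm (Fin n)) :
    consPerm n p e 0 = p := by
  simp [consPerm]

lemma consPerm_succ (n : ℕ) (p : Fin (n + 1)) (e : Equiv.Perm (Fin n)) (i : Fin n) :
    consPerm n p e i.succ = p.succAbove (e i) := by
  have : finSuccEquiv' (0 : Fin (n + 1)) i.succ = some i := by
    have := finSuccEquiv'_succAbove (0 : Fin (n + 1)) i
    simpa using this
  simp [consPerm, this]

lemma consPerm_bij (n : ℕ) :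
    Function.Bijective (fun q : Fin (n + 1) × Equiv.Perm (Fin n) => consPerm n q.1 q.2) := by
  rw [Fintype.bijective_iff_injective_and_card]
  constructor
  · rintro ⟨p, e⟩ ⟨p', e'⟩ h
    simp only at h
    have h0 : p = p' := by
      rw [← consPerm_zero n p e, h, consPerm_zero]
    subst h0
    congr 1
    ext i : 1
    have := congrArg (fun s => s i.succ) h
    simp only [consPerm_succ] at this
    exact Fin.succAbove_right_injective this
  · simp [Fintype.card_perm, Nat.factorial_succ]

lemma descents_eq (n : ℕ) (σ : Equiv.Perm (Fin n)) :
    descents n σ = ∑ a : Fin n, ∑ b : Fin n,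
      if (b : ℕ) = (a : ℕ) + 1 ∧ σ b < σ a then 1 else 0 := by
  rw [descents, Finset.card_filter, Fintype.sum_prod_type]

lemma descents_cons (n : ℕ) (p : Fin (n + 2)) (e : Equiv.Perm (Fin (n + 1))) :
    descents (n + 2) (consPerm (n + 1) p e) =
      (if (e 0 : ℕ) < p then 1 else 0) + descents (n + 1) e := by
  rw [descents_eq, descents_eq, Fin.sum_univ_succ]
  congr 1
  · rw [Fin.sum_univ_succ, Fin.sum_univ_succ]
    simp only [consPerm_zero, consPerm_succ, Fin.succAbove_lt_iff_castSucc_lt]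
    simp [Fin.lt_def]
  · apply Finset.sum_congr rfl
    intro a _
    rw [Fin.sum_univ_succ]
    simp only [consPerm_succ, Fin.succAbove_lt_succAbove_iff]
    simp

noncomputable def Ds (n r : ℕ) : PowerSeries ℚ :=
  ∑ σ : Equiv.Perm (Fin (n + 1)),
    if (σ 0 : ℕ) = r then (PowerSeries.X : PowerSeries ℚ) ^ descents (n + 1) σ else 0

lemma Ds_rec (n t : ℕ) (ht : t ≤ n + 1) :
    Ds (n + 1) t = ∑ r ∈ Finset.range (n + 1), (if r < t then PowerSeries.X else 1) * Ds n r := by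
  unfold Ds
  rw [← (consPerm_bij (n + 1)).sum_comp, Fintype.sum_prod_type]
  rw [Finset.sum_eq_single (⟨t, by omega⟩ : Fin (n + 2))]
  · simp only [consPerm_zero, if_true, descents_cons, Finset.mul_sum]
    rw [Finset.sum_comm]
    apply Finset.sum_congr rfl
    intro e _
    rw [Finset.sum_eq_single (e 0 : ℕ)]
    · rw [pow_add, if_pos rfl]; split_ifs <;> simp
    · intro b _ hb
      rw [if_neg hb.symm, mul_zero]
    · intro h
      simp at h
      omega
  · intro b _ hb
    apply Finset.sum_eq_zero
    intro e _
    rw [if_neg]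
    simp only [consPerm_zero]
    intro h
    apply hb
    ext
    exact h
  · simp

lemma Fs_eq_Ds (n : ℕ) : ∀ t ≤ n, (1 - PowerSeries.X) ^ n * Fs n t = Ds n t := by
  induction n with
  | zero =>
    intro t ht
    obtain rfl : t = 0 := by omega
    have h1 : Fs 0 0 = 1 := by
      ext k
      simp [Fs, cnt, PowerSeries.coeff_one]
    rw [h1, Ds, Finset.sum_eq_single (1 : Equiv.Perm (Fin 1))]
    · simp [descents_eq]
    · intro b _ hb
      exact absurd (Subsingleton.elim b 1) hb
    · simp
  | succ n ih =>
    intro t ht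
    rw [pow_succ, mul_assoc, Fs_rec n t ht, Ds_rec n t ht, Finset.mul_sum]
    apply Finset.sum_congr rfl
    intro r hr
    rw [← ih r (by simpa [Nat.lt_succ_iff] using hr)]
    ring

lemma eulerian_final (n : ℕ) : (1 - PowerSeries.X) ^ (n + 1) * Fs (n + 1) 0 =
    ∑ σ : Equiv.Perm (Fin (n + 1)), (PowerSeries.X : PowerSeries ℚ) ^ descents (n + 1) σ := by
  rw [Fs_eq_Ds (n + 1) 0 (by omega), Ds_rec n 0 (by omega)]
  simp only [Nat.not_lt_zero, if_false, one_mul]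
  unfold Ds
  rw [Finset.sum_comm]
  apply Finset.sum_congr rfl
  intro σ _
  rw [Finset.sum_eq_single (σ 0 : ℕ)]
  · simp
  · intro b _ hb
    rw [if_neg hb.symm]
  · intro h
    simp at h
    omega

/-! ### Lattice points -/

/-- Recursive description of the lattice points with last partial sum `t`. -/
def Pr : (n : ℕ) → (k t : ℕ) → (Fin n → ℤ) → Prop
  | 0, k, t, _ => k = t
  | n + 1, k, t, x => ∃ s : ℕ, Pr n k s (fun i => x i.castSucc) ∧ x (Fin.last n) = t - s ∧
      (n + 1) * t ≤ (n + 2) * s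

lemma Pr_le (n : ℕ) : ∀ k t x, Pr n k t x → t ≤ (n + 1) * k := by
  induction n with
  | zero => intro k t x h; simp only [Pr] at h; omega
  | succ n ih =>
    rintro k t x ⟨s, h, -, h2⟩
    have := ih _ _ _ h
    have h3 : (n + 1) * t ≤ (n + 1) * ((n + 2) * k) := by nlinarith
    exact Nat.le_of_mul_le_mul_left h3 (by omega)

lemma Pr_unique (n : ℕ) : ∀ k t t' x, Pr n k t x → Pr n k t' x → t = t' := by
  induction n with
  | zero => intro k t t' x h h'; simp only [Pr] at h h'; omega
  | succ n ih =>
    rintro k t t' x ⟨s, h, h1, -⟩ ⟨s', h', h1', -⟩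
    have := ih _ _ _ _ h h'
    omega

lemma Pr_card (n : ℕ) : ∀ k t, ∃ F : Finset (Fin n → ℤ),
    (∀ x, x ∈ F ↔ Pr n k t x) ∧ F.card = cnt n k t := by
  induction n with
  | zero =>
    intro k t
    refine ⟨if k = t then {Fin.elim0} else ∅, ?_, ?_⟩
    · intro x
      simp only [Pr]
      split_ifs with h
      · simp [h, Subsingleton.elim x Fin.elim0]
      · simp [h]
    · simp only [cnt]; split_ifs <;> simp
  | succ n ih =>
    intro k t
    choose F hF hc using ih k
    classical
    refine ⟨((Finset.range ((n + 1) * k + 1)).filter (fun s => (n + 1) * t ≤ (n + 2) * s)).biUnion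
      (fun s => (F s).image (fun x => (Fin.snoc x ((t : ℤ) - s) : Fin (n + 1) → ℤ))), ?_, ?_⟩
    · intro x
      simp only [Finset.mem_biUnion, Finset.mem_filter, Finset.mem_range, Finset.mem_image, Pr]
      constructor
      · rintro ⟨s, ⟨-, h2⟩, y, hy, rfl⟩
        refine ⟨s, ?_, by simp, h2⟩
        simpa using (hF s y).1 hy
      · rintro ⟨s, h1, h2, h3⟩
        refine ⟨s, ⟨Nat.lt_succ_of_le (Pr_le _ _ _ _ h1), h3⟩, _, (hF s _).2 h1, ?_⟩
        rw [← h2]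
        exact Fin.snoc_init_self x
    · rw [Finset.card_biUnion]
      · simp only [cnt]
        rw [Finset.sum_filter]
        apply Finset.sum_congr rfl
        intro s _
        rw [Finset.card_image_of_injective, hc]
        intro y y' h
        have := congrArg (fun z : Fin (n + 1) → ℤ => fun i : Fin n => z i.castSucc) h
        simpa using this
      · intro s _ s' _ hne
        rw [Function.onFun, Finset.disjoint_left]
        rintro x hx hx'
        simp only [Finset.mem_image] at hx hx'
        obtain ⟨y, -, rfl⟩ := hx
        obtain ⟨y', -, h⟩ := hx'
        have := congrFun h (Fin.last n)
        simp at this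
        exact hne this.symm

/-- Real parametrisation of dilates of the simplex. -/
def Sp (n : ℕ) (k : ℝ) (x : Fin n → ℝ) (S : ℕ → ℝ) : Prop :=
  S 0 = k ∧ (∀ i < n, S (i + 1) ≤ S i) ∧ 0 ≤ S n ∧
    ∀ i : Fin n, x i = ((i : ℕ) + 2) * S (i + 1) - ((i : ℕ) + 1) * S i

lemma Pr_iff (n : ℕ) : ∀ (k t : ℕ) (x : Fin n → ℤ), Pr n k t x ↔
    ∃ S, Sp n k (fun i => (x i : ℝ)) S ∧ (n + 1) * S n = t := by
  induction n with
  | zero =>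
    intro k t x
    simp only [Pr, Sp]
    constructor
    · rintro rfl
      exact ⟨fun _ => k, by simp, by simp⟩
    · rintro ⟨S, ⟨h, -⟩, h2⟩
      rw [h] at h2
      push_cast at h2
      have : (k : ℝ) = t := by linarith
      exact_mod_cast this
  | succ n ih =>
    intro k t x
    constructor
    · rintro ⟨s, h1, h2, h3⟩
      obtain ⟨S, ⟨a, b, c, d⟩, e⟩ := (ih _ _ _).1 h1
      have hn2 : (0 : ℝ) < (n : ℝ) + 2 := by positivity
      have hn1 : (0 : ℝ) < (n : ℝ) + 1 := by positivity
      have hne : ∀ i : ℕ, i < n + 1 → Function.update S (n + 1) (t / ((n : ℝ) + 2)) i = S i := by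
        intro i hi
        rw [Function.update_of_ne]; omega
      refine ⟨Function.update S (n + 1) (t / ((n : ℝ) + 2)), ⟨?_, ?_, ?_, ?_⟩, ?_⟩
      · rw [hne 0 (by omega), a]
      · intro i hi
        rw [hne i hi]
        rcases Nat.lt_succ_iff_lt_or_eq.1 hi with h | rfl
        · rw [hne _ (by omega)]; exact b i h
        · rw [Function.update_self, div_le_iff₀ hn2]
          have h3' : ((i : ℝ) + 1) * t ≤ (i + 2) * s := by exact_mod_cast h3
          rw [← e] at h3'
          have : ((i : ℝ) + 1) * t ≤ (i + 1) * (S i * (i + 2)) := by linarith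
          exact le_of_mul_le_mul_left this hn1
      · rw [Function.update_self]; positivity
      · intro i
        refine Fin.lastCases ?_ (fun i => ?_) i
        · simp only [Fin.val_last]
          rw [Function.update_self, hne n (by omega), h2]
          push_cast
          rw [← e]
          field_simp
        · simp only [Fin.val_castSucc]
          rw [hne _ (by omega), hne _ (by omega)]
          exact d i
      · rw [Function.update_self]
        push_cast
        field_simp
        ring
    · rintro ⟨S, ⟨a, b, c, d⟩, e⟩
      have hl := d (Fin.last n)
      simp only [Fin.val_last] at hl
      have hb := b n (by omega)
      push_cast at e
      have hs : ((t : ℤ) - x (Fin.last n) : ℝ) = (n + 1) * S n := by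
        rw [hl]; push_cast; linarith
      have hs0 : (0 : ℤ) ≤ t - x (Fin.last n) := by
        have : (0 : ℝ) ≤ ((t : ℤ) - x (Fin.last n) : ℝ) := by
          rw [hs]
          have : 0 ≤ S n := c.trans hb
          positivity
        exact_mod_cast this
      obtain ⟨s, hs'⟩ := Int.eq_ofNat_of_zero_le hs0
      have hsr : (s : ℝ) = (n + 1) * S n := by
        rw [← hs]
        have : ((t - x (Fin.last n) : ℤ) : ℝ) = ((s : ℤ) : ℝ) := by rw [hs']
        push_cast at this ⊢
        linarith
      refine ⟨s, (ih _ _ _).2 ⟨S, ⟨a, fun i hi => b i (by omega), c.trans hb, ?_⟩, hsr.symm⟩,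
        by omega, ?_⟩
      · intro i
        have := d i.castSucc
        simpa using this
      · have : ((n : ℝ) + 1) * t ≤ (n + 2) * s := by
          rw [hsr, ← e]
          have h1 : (0 : ℝ) ≤ ((n : ℝ) + 1) * (n + 2) := by positivity
          have := mul_le_mul_of_nonneg_left hb h1
          linarith
        exact_mod_cast this

lemma Sp_int (n k : ℕ) (x : Fin n → ℤ) : (∃ S, Sp n k (fun i => (x i : ℝ)) S) ↔
    ∃ t : ℕ, Pr n k t x := by
  constructor
  · rintro ⟨S, hS⟩
    have key : ∀ i ≤ n, ∃ T : ℤ, ((i : ℝ) + 1) * S i = T := by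
      intro i
      induction i with
      | zero => intro _; exact ⟨k, by rw [hS.1]; simp⟩
      | succ i ih =>
        intro hi
        obtain ⟨T, hT⟩ := ih (by omega)
        refine ⟨T + x ⟨i, by omega⟩, ?_⟩
        have := hS.2.2.2 ⟨i, by omega⟩
        simp only at this
        push_cast
        rw [this, ← hT]
        ring
    obtain ⟨T, hT⟩ := key n le_rfl
    have h0 : (0 : ℤ) ≤ T := by
      have : (0 : ℝ) ≤ T := by
        rw [← hT]
        have := hS.2.2.1
        positivity
      exact_mod_cast this
    obtain ⟨t, rfl⟩ := Int.eq_ofNat_of_zero_le h0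
    exact ⟨t, (Pr_iff n k t x).2 ⟨S, hS, by simpa using hT⟩⟩
  · rintro ⟨t, h⟩
    obtain ⟨S, hS, -⟩ := (Pr_iff n k t x).1 h
    exact ⟨S, hS⟩

lemma vert_Sp (N j : ℕ) (hj : j ≤ N) :
    Sp N 1 (Cvert (N + 1) j) (fun i => if i + j ≤ N then 1 else 0) := by
  refine ⟨by simp [hj], ?_, ?_, ?_⟩
  · intro i _
    simp only
    split_ifs <;> first | omega | norm_num
  · simp only
    split_ifs <;> norm_num
  · intro i
    have hN : ((N + 1 : ℕ) : ℝ) = N + 1 := by push_cast; ring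
    simp only [Cvert]
    split_ifs with h1 h2 h3 h4 h5 h6 <;> first | omega | skip
    all_goals try ring
    have : (i : ℕ) + j = N := by omega
    have : ((i : ℕ) : ℝ) + j = N := by exact_mod_cast this
    push_cast
    linarith

lemma Qpoly_Sp (N : ℕ) (x : Fin N → ℝ) (hx : x ∈ Qpoly (N + 1)) : ∃ S, Sp N 1 x S := by
  have hsub : Qpoly (N + 1) ⊆ {x : Fin N → ℝ | ∃ S, Sp N 1 x S} := by
    apply convexHull_min
    · rintro y ⟨j, hj, rfl⟩
      exact ⟨_, vert_Sp N j hj⟩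
    · rintro y ⟨S, a, b, c, d⟩ z ⟨S', a', b', c', d'⟩ u v hu hv huv
      refine ⟨fun i => u * S i + v * S' i, ?_, ?_, ?_, ?_⟩
      · simp only [a, a']; linarith
      · intro i hi
        have := mul_le_mul_of_nonneg_left (b i hi) hu
        have := mul_le_mul_of_nonneg_left (b' i hi) hv
        simp only
        linarith
      · positivity
      · intro i
        simp only [Pi.add_apply, Pi.smul_apply, smul_eq_mul, d, d']
        ring
  exact hsub hx

lemma tele (N : ℕ) (S g : ℕ → ℝ) :
    ∑ j ∈ Finset.range N, (S j - S (j + 1)) * g j + S N * g N =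
      S 0 * g 0 + ∑ j ∈ Finset.range N, S (j + 1) * (g (j + 1) - g j) := by
  induction N with
  | zero => simp
  | succ N ih =>
    rw [Finset.sum_range_succ, Finset.sum_range_succ, ← add_assoc, ← ih]
    ring

lemma Sp_Qpoly (N : ℕ) (x : Fin N → ℝ) (S : ℕ → ℝ) (hS : Sp N 1 x S) : x ∈ Qpoly (N + 1) := by
  obtain ⟨a, b, c, d⟩ := hS
  set w : ℕ → ℝ := fun m => if m < N then S m - S (m + 1) else S m with hw
  have hsum : ∀ g : ℕ → ℝ, ∑ m ∈ Finset.range (N + 1), w m * g m =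
      S 0 * g 0 + ∑ j ∈ Finset.range N, S (j + 1) * (g (j + 1) - g j) := by
    intro g
    rw [← tele, Finset.sum_range_succ]
    congr 1
    · apply Finset.sum_congr rfl
      intro m hm
      rw [Finset.mem_range] at hm
      simp [hw, hm]
    · simp [hw]
  have hx : x = ∑ m ∈ Finset.range (N + 1), w m • (Cvert (N + 1) (N - m) : Fin N → ℝ) := by
    ext i
    rw [Finset.sum_apply]
    simp only [Pi.smul_apply, smul_eq_mul]
    have hC : ∀ m ∈ Finset.range (N + 1), w m * (Cvert (N + 1) (N - m) : Fin N → ℝ) i =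
        w m * (fun m : ℕ => if (i : ℕ) < m then (1 : ℝ) else if (i : ℕ) = m then
          -((m : ℝ) + 1) else 0) m := by
      intro m hm
      rw [Finset.mem_range] at hm
      congr 1
      have hmN : ((N - m : ℕ) : ℝ) = N - m := by rw [Nat.cast_sub (by omega)]
      simp only [Cvert, hmN]
      split_ifs <;> first | omega | skip
      all_goals try rfl
      push_cast
      ring
    rw [Finset.sum_congr rfl hC, d i]
    have hi := i.2
    generalize (i : ℕ) = i' at *
    rw [Finset.sum_range_succ]
    have e1 : w i' = S i' - S (i' + 1) := by simp [hw, hi]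
    -- direct evaluation
    have key : ∀ M, i' < M → M ≤ N → ∑ m ∈ Finset.range M, w m * (fun m : ℕ =>
        if i' < m then (1 : ℝ) else if i' = m then -((m : ℝ) + 1) else 0) m
        = ((i' : ℝ) + 2) * S (i' + 1) - (i' + 1) * S i' - S M := by
      intro M hM
      induction M, hM using Nat.le_induction with
      | base =>
        intro _
        rw [Finset.sum_range_succ, Finset.sum_eq_zero]
        · simp only [lt_irrefl, if_false, if_true, e1]; ring
        · intro m hm
          rw [Finset.mem_range] at hm
          simp only
          rw [if_neg (by omega), if_neg (by omega), mul_zero]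
      | succ M hM ih =>
        intro hMN
        rw [Finset.sum_range_succ, ih (by omega)]
        have : w M = S M - S (M + 1) := by simp only [hw]; rw [if_pos (by omega)]
        simp only [this]
        rw [if_pos (by omega)]
        ring
    rw [key N hi le_rfl]
    simp [hw, hi]
  rw [hx]
  apply (convex_convexHull ℝ _).sum_mem
  · intro m hm
    rw [Finset.mem_range] at hm
    simp only [hw]
    split_ifs with h
    · linarith [b m h]
    · obtain rfl : m = N := by omega
      exact c
  · have := hsum (fun _ => 1)
    simp only [mul_one, sub_self, mul_zero, Finset.sum_const_zero, a] at this
    linarith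
  · intro m hm
    apply subset_convexHull
    exact ⟨N - m, by omega, rfl⟩

lemma dilate_iff (N k : ℕ) (x : Fin N → ℝ) :
    x ∈ (k : ℝ) • Qpoly (N + 1) ↔ ∃ S, Sp N k x S := by
  constructor
  · rintro ⟨y, hy, rfl⟩
    obtain ⟨S, a, b, c, d⟩ := Qpoly_Sp N y hy
    refine ⟨fun i => k * S i, by simp [a], ?_, by positivity, ?_⟩
    · intro i hi
      exact mul_le_mul_of_nonneg_left (b i hi) (by positivity)
    · intro i
      simp only [Pi.smul_apply, smul_eq_mul]
      have := d i
      simp only [this]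
      ring
  · rintro ⟨S, a, b, c, d⟩
    rcases Nat.eq_zero_or_pos k with rfl | hk
    · have hle : ∀ i ≤ N, S i ≤ 0 := by
        intro i
        induction i with
        | zero => intro _; simp [a]
        | succ i ih => intro hi; exact (b i (by omega)).trans (ih (by omega))
      have hge : ∀ j ≤ N, 0 ≤ S (N - j) := by
        intro j
        induction j with
        | zero => intro _; simpa using c
        | succ j ih =>
          intro hj
          refine (ih (by omega)).trans ?_
          have := b (N - (j + 1)) (by omega)
          rwa [show N - (j + 1) + 1 = N - j by omega] at this
      have hz : ∀ i ≤ N, S i = 0 := by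
        intro i hi
        apply le_antisymm (hle i hi)
        have := hge (N - i) (by omega)
        rwa [show N - (N - i) = i by omega] at this
      have hx : x = 0 := by
        ext i
        have hi := i.2
        rw [d i, hz _ (by omega), hz _ (by omega)]
        simp
      refine ⟨Cvert (N + 1) 0, subset_convexHull _ _ ⟨0, by omega, rfl⟩, ?_⟩
      rw [hx]
      simp
    · have hk' : (0 : ℝ) < k := by exact_mod_cast hk
      refine ⟨(k : ℝ)⁻¹ • x, Sp_Qpoly N _ (fun i => (k : ℝ)⁻¹ * S i) ⟨?_, ?_, ?_, ?_⟩, ?_⟩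
      · simp only [a]; field_simp
      · intro i hi
        exact mul_le_mul_of_nonneg_left (b i hi) (by positivity)
      · positivity
      · intro i
        simp only [Pi.smul_apply, smul_eq_mul, d]
        ring
      · simp only [smul_smul]
        rw [mul_inv_cancel₀ hk'.ne', one_smul]

lemma latticeCount_eq (N k : ℕ) : latticeCount (N + 1) k = cnt (N + 1) k 0 := by
  have hset : {x : Fin N → ℤ | (fun i => (x i : ℝ)) ∈ (k : ℝ) • Qpoly (N + 1)} =
      {x : Fin N → ℤ | ∃ t : ℕ, Pr N k t x} := by
    ext x
    exact (dilate_iff N k _).trans (Sp_int N k x)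
  have h1 : latticeCount (N + 1) k = Set.ncard {x : Fin N → ℤ | ∃ t : ℕ, Pr N k t x} := by
    rw [← hset]; rfl
  rw [h1]
  choose F hF hc using Pr_card N k
  classical
  have h2 : {x : Fin N → ℤ | ∃ t : ℕ, Pr N k t x} =
      ((Finset.range ((N + 1) * k + 1)).biUnion F : Finset (Fin N → ℤ)) := by
    ext x
    simp only [Set.mem_ofPred_eq, Finset.coe_biUnion, Set.mem_iUnion, Finset.mem_coe, hF,
      Finset.mem_range, exists_prop]
    constructor
    · rintro ⟨t, h⟩
      exact ⟨t, Nat.lt_succ_of_le (Pr_le _ _ _ _ h), h⟩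
    · rintro ⟨t, -, h⟩
      exact ⟨t, h⟩
  rw [h2, Set.ncard_coe_finset, Finset.card_biUnion]
  · simp [cnt, hc]
  · intro s _ s' _ hne
    rw [Function.onFun, Finset.disjoint_left]
    intro x hx hx'
    exact hne (Pr_unique _ _ _ _ _ ((hF _ _).1 hx) ((hF _ _).1 hx'))

/-- For every integer `n ≥ 2`, the `δ`-polynomial of `Q_n` equals the
`n`-th Eulerian polynomial `A_n(z) = ∑_{σ ∈ S_n} z^{des σ}`: as formal power series,
`(1 - z)^n · ∑_{k ≥ 0} #(kQ_n ∩ ℤ^{n-1}) z^k = ∑_{σ ∈ S_n} z^{des σ}`. -/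
theorem stmt_9 (n : ℕ) (hn : 2 ≤ n) :
    (1 - PowerSeries.X : PowerSeries ℚ) ^ n *
        PowerSeries.mk (fun k => (latticeCount n k : ℚ)) =
      ∑ σ : Equiv.Perm (Fin n), (PowerSeries.X : PowerSeries ℚ) ^ descents n σ := by
  obtain ⟨N, rfl⟩ : ∃ N, n = N + 1 := ⟨n - 1, by omega⟩
  rw [← eulerian_final N]
  simp only [latticeCount_eq]
  rfl
end

section
/- For every integer n ≥ 2, the lattice point enumerator of the pyramid Pyr(Q_n) ⊂ ℝ^n agrees with that of the n-dimensional lecture hall simplex R_n: for every positive integer k, #(k·Pyr(Q_n) ∩ ℤ^n) = #{ λ ∈ ℤ^n : 0 ≤ λ_1/1 ≤ λ_2/2 ≤ ⋯ ≤ λ_n/n ≤ k }. -/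
open Finset Pointwise

/-- Difference coordinates: the affine unimodular map from lecture hall to pyramid coordinates. -/
def Hmap {R : Type*} [Ring R] {d : ℕ} (c : R) (l : Fin (d + 1) → R) : Fin (d + 1) → R :=
  Fin.snoc (fun i : Fin d => c - (l i.succ - l i.castSucc)) (l 0)

theorem Hmap_inj {R : Type*} [Ring R] {d : ℕ} (c : R) :
    Function.Injective (Hmap c : (Fin (d + 1) → R) → (Fin (d + 1) → R)) := by
  intro l l' h
  have h0 : l 0 = l' 0 := by
    have := congrFun h (Fin.last d)
    simpa [Hmap] using this
  have h1 : ∀ i : Fin d, l i.succ - l i.castSucc = l' i.succ - l' i.castSucc := by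
    intro i
    have := congrFun h i.castSucc
    simpa [Hmap] using this
  funext p
  induction p using Fin.induction with
  | zero => exact h0
  | succ i ih =>
    have := h1 i
    rw [ih] at this
    exact sub_left_injective this

theorem Hmap_surj {R : Type*} [Ring R] {d : ℕ} (c : R) :
    Function.Surjective (Hmap c : (Fin (d + 1) → R) → (Fin (d + 1) → R)) := by
  intro y
  refine ⟨fun j => y (Fin.last d) + ∑ i ∈ Finset.range (j : ℕ),
    (c - if h : i < d + 1 then y ⟨i, h⟩ else 0), ?_⟩
  funext p
  induction p using Fin.lastCases with
  | last => simp [Hmap]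
  | cast i =>
    have hi : (i : ℕ) < d + 1 := by omega
    simp only [Hmap, Fin.snoc_castSucc, Fin.val_succ, Fin.val_castSucc, Finset.sum_range_succ,
      hi, dif_pos]
    have : (⟨(i : ℕ), hi⟩ : Fin (d + 1)) = i.castSucc := rfl
    rw [this]
    abel

/-- The real lecture hall simplex. -/
def LH (d : ℕ) (l : Fin (d + 1) → ℝ) : Prop :=
  0 ≤ l 0 ∧ (∀ i : Fin d, l i.castSucc * ((i : ℝ) + 2) ≤ l i.succ * ((i : ℝ) + 1)) ∧
    l (Fin.last d) ≤ (d : ℝ) + 1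

/-- Vertices of the lecture hall simplex. -/
noncomputable def lv (d m : ℕ) : Fin (d + 1) → ℝ :=
  fun p => if (p : ℕ) < m then 0 else (p : ℝ) + 1

theorem lv_LH (d m : ℕ) : LH d (lv d m) := by
  refine ⟨?_, ?_, ?_⟩
  · simp only [lv]; split_ifs <;> simp
  · intro i
    have : (0 : ℝ) ≤ (i : ℕ) := Nat.cast_nonneg _
    simp only [lv, Fin.val_castSucc, Fin.val_succ]
    split_ifs
    · simp
    · push_cast; rw [zero_mul]; positivity
    · omega
    · push_cast; nlinarith
  · simp only [lv]; split_ifs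
    · positivity
    · simp

theorem Hmap_lv_zero (d : ℕ) :
    Hmap (1 : ℝ) (lv d 0) = Fin.snoc (0 : Fin d → ℝ) 1 := by
  funext p
  induction p using Fin.lastCases with
  | last => simp [Hmap, lv]
  | cast i => simp [Hmap, lv]

theorem Hmap_lv_pos (d m : ℕ) (hm : 1 ≤ m) (hm' : m ≤ d + 1) :
    Hmap (1 : ℝ) (lv d m) = Fin.snoc (Cvert (d + 1) (d + 1 - m) : Fin d → ℝ) 0 := by
  funext p
  induction p using Fin.lastCases with
  | last => simp only [Hmap, lv, Fin.snoc_last]; rw [if_pos]; simp only [Fin.val_zero]; omega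
  | cast i =>
    have e : d + 1 - (d + 1 - m) = m := by omega
    simp only [Hmap, lv, Fin.snoc_castSucc, Cvert, Fin.val_castSucc, Fin.val_succ, e,
      Nat.cast_sub hm']
    rcases lt_trichotomy ((i : ℕ) + 1) m with h | h | h
    · rw [if_pos h, if_pos h, if_pos (by omega)]; simp
    · rw [if_neg (show ¬ (i : ℕ) + 1 < m by omega), if_pos (show (i : ℕ) < m by omega),
        if_neg (show ¬ (i : ℕ) + 1 < m by omega), if_pos h, ← h]
      push_cast; ring
    · rw [if_neg (by omega), if_neg (by omega), if_neg (by omega), if_neg (by omega)]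
      push_cast; ring

theorem Hmap_comb {d : ℕ} (l l' : Fin (d + 1) → ℝ) (a b : ℝ) (hab : a + b = 1) :
    Hmap (1 : ℝ) (a • l + b • l') = a • Hmap 1 l + b • Hmap 1 l' := by
  funext p
  induction p using Fin.lastCases with
  | last => simp [Hmap]
  | cast i => 
    simp only [Hmap, Fin.snoc_castSucc, Pi.add_apply, Pi.smul_apply, smul_eq_mul]
    linear_combination -hab

theorem LH_convex (d : ℕ) : Convex ℝ {z | ∃ l, LH d l ∧ Hmap (1 : ℝ) l = z} := by
  rintro _ ⟨l, ⟨h1, h2, h3⟩, rfl⟩ _ ⟨l', ⟨h1', h2', h3'⟩, rfl⟩ a b ha hb hab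
  refine ⟨a • l + b • l', ⟨?_, ?_, ?_⟩, Hmap_comb l l' a b hab⟩
  · simp only [Pi.add_apply, Pi.smul_apply, smul_eq_mul]; positivity
  · intro i
    simp only [Pi.add_apply, Pi.smul_apply, smul_eq_mul]
    have := mul_le_mul_of_nonneg_left (h2 i) ha
    have := mul_le_mul_of_nonneg_left (h2' i) hb
    linarith
  · simp only [Pi.add_apply, Pi.smul_apply, smul_eq_mul]
    have := mul_le_mul_of_nonneg_left h3 ha
    have := mul_le_mul_of_nonneg_left h3' hb
    have : a * ((d : ℝ) + 1) + b * ((d : ℝ) + 1) = d + 1 := by rw [← add_mul, hab, one_mul]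
    linarith

theorem pyr_sub (d : ℕ) :
    (pyr (d := d) (Qpoly (d + 1))) ⊆ {z | ∃ l, LH d l ∧ Hmap (1 : ℝ) l = z} := by
  apply convexHull_min _ (LH_convex d)
  rintro z (⟨x, hx, rfl⟩ | hz)
  · have key : Qpoly (d + 1) ⊆ {x : Fin d → ℝ | (Fin.snoc x 0 : Fin (d + 1) → ℝ) ∈
        {z | ∃ l, LH d l ∧ Hmap (1 : ℝ) l = z}} := by
      apply convexHull_min
      · rintro x ⟨j, hj, rfl⟩
        have hj' : j ≤ d := hj
        refine ⟨lv d (d + 1 - j), lv_LH _ _, ?_⟩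
        rw [Hmap_lv_pos d _ (by omega) (by omega)]
        have : d + 1 - (d + 1 - j) = j := by omega
        rw [this]
      · intro x hx y hy a b ha hb hab
        have := LH_convex d hx hy ha hb hab
        have e : (Fin.snoc (a • x + b • y) 0 : Fin (d + 1) → ℝ) =
            a • (Fin.snoc x 0 : Fin (d + 1) → ℝ) + b • (Fin.snoc y 0 : Fin (d + 1) → ℝ) := by
          funext p
          induction p using Fin.lastCases with
          | last => simp
          | cast i => simp
        show (Fin.snoc (a • x + b • y) 0 : Fin (d + 1) → ℝ) ∈
          {z | ∃ l, LH d l ∧ Hmap (1 : ℝ) l = z}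
        rw [e]; exact this
    exact key hx
  · rw [Set.mem_singleton_iff] at hz
    exact ⟨lv d 0, lv_LH _ _, (Hmap_lv_zero d).trans hz.symm⟩

theorem lv_mem (d m : ℕ) (hm : m ≤ d + 1) :
    Hmap (1 : ℝ) (lv d m) ∈ pyr (d := d) (Qpoly (d + 1)) := by
  apply subset_convexHull
  rcases Nat.eq_zero_or_pos m with rfl | h
  · right; exact Hmap_lv_zero d
  · left
    refine ⟨_, ?_, (Hmap_lv_pos d m h hm).symm⟩
    apply subset_convexHull
    exact ⟨d + 1 - m, by omega, rfl⟩

theorem sum_aux (t : ℕ → ℝ) (p N : ℕ) :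
    ∑ m ∈ Finset.range N, (t (m + 1) - t m) * (if p < m + 1 then 0 else (p : ℝ) + 1) =
      ((p : ℝ) + 1) * (t (min N p) - t 0) := by
  induction N with
  | zero => simp
  | succ N ih =>
    rw [Finset.sum_range_succ, ih]
    split_ifs with h
    · rw [min_eq_right (by omega), min_eq_right (by omega)]; ring
    · rw [min_eq_left (by omega), min_eq_left (by omega)]; ring

theorem mem_pyr_of_LH (d : ℕ) (l : Fin (d + 1) → ℝ) (hl : LH d l) :
    Hmap (1 : ℝ) l ∈ pyr (d := d) (Qpoly (d + 1)) := by
  obtain ⟨h1, h2, h3⟩ := hl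
  -- the preimage under Hmap is convex
  have hconv : Convex ℝ {l | Hmap (1 : ℝ) l ∈ pyr (d := d) (Qpoly (d + 1))} := by
    intro x hx y hy a b ha hb hab
    show Hmap (1 : ℝ) (a • x + b • y) ∈ pyr (d := d) (Qpoly (d + 1))
    rw [Hmap_comb _ _ _ _ hab]
    exact convex_convexHull ℝ _ hx hy ha hb hab
  let t : ℕ → ℝ := fun p => if h : p < d + 1 then l ⟨p, h⟩ / ((p : ℝ) + 1) else 1
  have t0 : t 0 = l 0 := by simp [t]
  let w : ℕ → ℝ := fun m => if m = 0 then t 0 else t m - t (m - 1)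
  have hw : ∀ m ∈ Finset.range (d + 2), 0 ≤ w m := by
    intro m hm
    rw [Finset.mem_range] at hm
    rcases m with _ | m
    · simpa [w, t0] using h1
    · simp only [w, Nat.succ_ne_zero, if_false, Nat.add_sub_cancel, sub_nonneg]
      by_cases hmd : m < d
      · have := h2 ⟨m, hmd⟩
        simp only [t]
        rw [dif_pos (by omega), dif_pos (by omega), div_le_div_iff₀ (by positivity)
          (by positivity)]
        push_cast
        have e : (m : ℝ) + 1 + 1 = m + 2 := by ring
        rw [e]; exact this
      · have : m = d := by omega
        subst this
        simp only [t]
        rw [dif_pos (by omega), dif_neg (by omega), div_le_one (by positivity)]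
        exact h3
  have hs : ∑ m ∈ Finset.range (d + 2), w m = 1 := by
    rw [Finset.sum_range_succ']
    simp only [w, Nat.succ_ne_zero, if_false, Nat.add_sub_cancel, if_true]
    rw [Finset.sum_range_sub]
    simp [t]
  have := hconv.sum_mem hw hs (z := fun m => lv d m)
    (fun m hm => lv_mem d m (by rw [Finset.mem_range] at hm; omega))
  have e : ∑ m ∈ Finset.range (d + 2), w m • lv d m = l := by
    funext p
    rw [Finset.sum_apply, Finset.sum_range_succ']
    simp only [w, Nat.succ_ne_zero, if_false, Nat.add_sub_cancel, if_true, Pi.smul_apply,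
      smul_eq_mul, lv]
    rw [sum_aux, min_eq_right (by omega)]
    have hp : t p = l p / ((p : ℝ) + 1) := by
      simp only [t]; rw [dif_pos p.2]
    rw [hp]
    have : ((p : ℕ) : ℝ) + 1 ≠ 0 := by positivity
    simp only [Nat.not_lt_zero, if_false]
    field_simp
    ring
  rw [e] at this
  exact this

theorem mem_pyr_iff (d : ℕ) (l : Fin (d + 1) → ℝ) :
    Hmap (1 : ℝ) l ∈ pyr (d := d) (Qpoly (d + 1)) ↔ LH d l := by
  refine ⟨fun h => ?_, mem_pyr_of_LH d l⟩
  obtain ⟨l', hl', e⟩ := pyr_sub d h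
  rwa [← Hmap_inj 1 e]

theorem main_aux (d k : ℕ) (hk : 1 ≤ k) :
    Set.ncard {y : Fin (d + 1) → ℤ |
        (fun i => (y i : ℝ)) ∈ (k : ℝ) • pyr (d := d) (Qpoly (d + 1))} =
    Set.ncard {lam : Fin (d + 1) → ℤ |
        0 ≤ (lam 0 : ℝ) / 1 ∧
        (∀ i j : Fin (d + 1), (j : ℕ) = (i : ℕ) + 1 →
          (lam i : ℝ) / ((i : ℕ) + 1) ≤ (lam j : ℝ) / ((j : ℕ) + 1)) ∧
        (lam (Fin.last d) : ℝ) / ((d : ℕ) + 1) ≤ (k : ℝ)} := by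
  have hk0 : (0 : ℝ) < k := by exact_mod_cast hk
  symm
  rw [← Set.ncard_image_of_injective _ (Hmap_inj (d := d) (k : ℤ))]
  symm
  congr 1
  ext y
  obtain ⟨l, rfl⟩ := Hmap_surj (k : ℤ) y
  rw [(Hmap_inj (k : ℤ)).mem_set_image]
  simp only [Set.mem_ofPred_eq]
  rw [Set.mem_smul_set_iff_inv_smul_mem₀ hk0.ne']
  have e : ((k : ℝ)⁻¹ • fun i => ((Hmap (k : ℤ) l i : ℤ) : ℝ)) =
      Hmap (1 : ℝ) (fun i => (l i : ℝ) / k) := by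
    funext p
    induction p using Fin.lastCases with
    | last => simp [Hmap]; ring
    | cast i =>
      simp only [Hmap, Pi.smul_apply, Fin.snoc_castSucc, smul_eq_mul]
      push_cast
      field_simp
  rw [e, mem_pyr_iff]
  unfold LH
  refine and_congr ?_ (and_congr ?_ ?_)
  · rw [div_one, le_div_iff₀ hk0, zero_mul]
  · have key : ∀ i : Fin d, ((l i.castSucc : ℝ) / k * ((i : ℝ) + 2) ≤
        (l i.succ : ℝ) / k * ((i : ℝ) + 1)) ↔
        (l i.castSucc : ℝ) / (((i.castSucc : Fin (d + 1)) : ℕ) + 1) ≤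
          (l i.succ : ℝ) / (((i.succ : Fin (d + 1)) : ℕ) + 1) := by
      intro i
      rw [div_le_div_iff₀ (by positivity) (by positivity), div_mul_eq_mul_div,
        div_mul_eq_mul_div, div_le_div_iff_of_pos_right hk0]
      simp only [Fin.val_castSucc, Fin.val_succ]
      push_cast
      have e : ((i : ℕ) : ℝ) + 1 + 1 = (i : ℕ) + 2 := by ring
      rw [e]
    constructor
    · intro h i j hij
      have hi : (i : ℕ) < d := by omega
      have h1 : i = (⟨i, hi⟩ : Fin d).castSucc := rfl
      have h2 : j = (⟨i, hi⟩ : Fin d).succ := Fin.ext hij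
      rw [h1, h2]
      exact (key _).1 (h _)
    · intro h i
      exact (key i).2 (h _ _ (by simp))
  · rw [div_le_iff₀ hk0, div_le_iff₀ (by positivity), mul_comm]

/-- For every integer `n ≥ 2` and every positive integer `k`, the
number of lattice points of the `k`-th dilate of the pyramid `Pyr(Q_n) ⊂ ℝ^n` equals
the number of lattice points of the `k`-th dilate of the `n`-dimensional lecture hall
simplex: `#(k·Pyr(Q_n) ∩ ℤ^n) = #{λ ∈ ℤ^n : 0 ≤ λ_1/1 ≤ λ_2/2 ≤ ⋯ ≤ λ_n/n ≤ k}`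
(here `n = (n-1)+1` since `n ≥ 2`, and `λ_i` is the coordinate indexed 1-based by `i`). -/
theorem stmt_10 (n : ℕ) (hn : 2 ≤ n) (k : ℕ) (hk : 1 ≤ k) :
    Set.ncard {y : Fin (n - 1 + 1) → ℤ |
        (fun i => (y i : ℝ)) ∈ (k : ℝ) • pyr (Qpoly n)} =
    Set.ncard {lam : Fin (n - 1 + 1) → ℤ |
        0 ≤ (lam 0 : ℝ) / 1 ∧
        (∀ i j : Fin (n - 1 + 1), (j : ℕ) = (i : ℕ) + 1 →
          (lam i : ℝ) / ((i : ℕ) + 1) ≤ (lam j : ℝ) / ((j : ℕ) + 1)) ∧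
        (lam (Fin.last (n - 1)) : ℝ) / ((n - 1 : ℕ) + 1) ≤ (k : ℝ)} := by
  obtain ⟨d, rfl⟩ : ∃ d, n = d + 1 := ⟨n - 1, by omega⟩
  exact main_aux d k hk
end
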